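/- arXiv:math/9605202 — 4 statements merged into one kernel-verified Lean document; each statement's English description precedes it below -/
import Mathlib

section
/- Let F be a nontrivial finite perfect group and let G_n = F for all n ∈ ℕ. Then c(∏_{n∈ℕ} G_n) = ω₁; that is, the full direct product ∏_n G_n cannot be written as the union of a countable increasing chain of proper subgroups, but it can be written as the union of an increasing chain (H_α)_{α<ω₁} of proper subgroups indexed by the countable ordinals. -/
/-!
*Countable chains.* Let `H n` increase to `J → G`. For pairwise disjoint sets `A n ⊆ J` a diagonal
argument yields an `n` such that every function on `A n` extends to an element of `H n`. As `G` is
perfect, commutators of these extensions with functions constant on `A n` exhaust, up to raising the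
level, the functions supported in `A n`. Hence one cannot split off pieces from `J` forever that
escape the chain: some `B`, captured by no `H n`, has the property that every `A ⊆ B` is captured by
a fixed `H m` or has its complement in `B` captured by some `H n`. Since `g : J → G` takes finitely
many values, only one of its level sets in `B` can be large, so `g` is constant on `B` up to an
element of `H m`, and `B` is captured after all.

*Uncountable chains.* If `#ι ≤ 𝔠`, then `ι → Bool` is separable, hence a continuous image of the
space of ultrafilters on `J`; restrict this map to a closed set `E` on which it is irreducible. A
function `g : J → G` has a limit along every ultrafilter in `E`. By irreducibility this limit is
constant on the fibres over a dense open set, and by separability countably many coordinates of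
`ι → Bool` determine it over a dense open set. The functions determined in this way by the
coordinates below `i` form a subgroup, which is proper because it misses a function of the `i`-th
coordinate. When `ι` has uncountable cofinality these subgroups cover `J → G`.
-/

open Filter Function Set Topology
open scoped Cardinal commutatorElement

universe u v

section CountableChains

variable {J κ G : Type*}

theorem exists_forall_exists_eqOn_of_cover {X : J → Type*} [Nonempty κ]
    {H : κ → Set (∀ j, X j)} (hcover : ∀ g : ∀ j, X j, ∃ n, g ∈ H n)
    {A : κ → Set J} (hA : Pairwise (Disjoint on A)) :
    ∃ n, ∀ g : ∀ j, X j, ∃ h ∈ H n, ∀ j ∈ A n, h j = g j := by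
  have hindex : ∀ j, ∃ n, ∀ m, j ∈ A m → n = m := fun j => by
    by_cases hj : ∃ n, j ∈ A n
    · obtain ⟨n, hn⟩ := hj
      exact ⟨n, fun m hm => hA.eq (not_disjoint_iff.2 ⟨j, hn, hm⟩)⟩
    · exact ⟨Classical.arbitrary κ, fun m hm => (hj ⟨m, hm⟩).elim⟩
  choose index hindex using hindex
  by_contra! hfail
  choose g hg using hfail
  obtain ⟨n, hn⟩ := hcover fun j => g (index j) j
  obtain ⟨j, hj, hne⟩ := hg n _ hn
  exact hne (by rw [hindex j n hj])

variable [Group G]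

variable (G) in
/-- The subgroup of functions `J → G` whose multiplicative support is contained in `A`. -/
def supportedSubgroup (A : Set J) : Subgroup (J → G) :=
  Subgroup.pi Aᶜ fun _ => ⊥

theorem mem_supportedSubgroup {A : Set J} {g : J → G} :
    g ∈ supportedSubgroup G A ↔ mulSupport g ⊆ A :=
  mulSupport_subset_iff'.symm

theorem supportedSubgroup_univ : supportedSubgroup G (univ : Set J) = ⊤ :=
  eq_top_iff.2 fun _ _ => mem_supportedSubgroup.2 (subset_univ _)

theorem supportedSubgroup_mono {A B : Set J} (hAB : A ⊆ B) :
    supportedSubgroup G A ≤ supportedSubgroup G B :=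
  fun _ hg => mem_supportedSubgroup.2 ((mem_supportedSubgroup.1 hg).trans hAB)

theorem mem_of_forall_mulIndicator_preimage_mem [Finite κ] {H : Subgroup (J → G)}
    (c : J → κ) {g : J → G} (hg : ∀ a, (c ⁻¹' {a}).mulIndicator g ∈ H) : g ∈ H := by
  classical
  cases nonempty_fintype κ
  suffices hfin : ∀ T : Finset κ, (c ⁻¹' T).mulIndicator g ∈ H by
    simpa using hfin Finset.univ
  intro T
  induction T using Finset.induction_on with
  | empty =>
    rw [Finset.coe_empty, preimage_empty, mulIndicator_empty]
    exact H.one_mem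
  | insert a T ha ih =>
    have hdisj : Disjoint (c ⁻¹' {a}) (c ⁻¹' T) :=
      (disjoint_singleton_left.2 ha).preimage c
    rw [Finset.coe_insert, insert_eq, preimage_union, mulIndicator_union_of_disjoint hdisj]
    exact H.mul_mem (hg a) ih

theorem supportedSubgroup_le_of_forall_inter_preimage [Finite κ] {H : Subgroup (J → G)}
    {A : Set J} (c : J → κ) (h : ∀ a, supportedSubgroup G (A ∩ c ⁻¹' {a}) ≤ H) :
    supportedSubgroup G A ≤ H := by
  intro g hg
  refine mem_of_forall_mulIndicator_preimage_mem c fun a => h a ?_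
  rw [mem_supportedSubgroup] at hg ⊢
  rw [mulSupport_mulIndicator, inter_comm]
  exact inter_subset_inter_left _ hg

theorem mulIndicator_const_mem_of_commutator_eq_top (hG : commutator G = ⊤)
    {H : Subgroup (J → G)} {A : Set J} (hrestr : ∀ g : J → G, ∃ h ∈ H, ∀ j ∈ A, h j = g j)
    (hconst : ∀ a : G, A.mulIndicator (const J a) ∈ H) {C : Set J} (hC : C ⊆ A) (a : G) :
    C.mulIndicator (const J a) ∈ H := by
  let K : Subgroup G := H.comap ((mulIndicatorHom G C).comp (Pi.constMonoidHom J G))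
  suffices hK : commutator G ≤ K from hK (hG ▸ Subgroup.mem_top a)
  refine Subgroup.commutator_le.2 fun a _ b _ => ?_
  -- The behaviour of `h` outside `A` is irrelevant: it is cancelled in the commutator.
  obtain ⟨h, hh, hhb⟩ := hrestr (C.mulIndicator (const J b))
  have hcomm : C.mulIndicator (const J ⁅a, b⁆) = ⁅A.mulIndicator (const J a), h⁆ := by
    ext j
    by_cases hj : j ∈ A
    · by_cases hjC : j ∈ C <;> simp [commutatorElement_def, hj, hjC, hhb]
    · have hjC : j ∉ C := fun hjC => hj (hC hjC)
      simp [commutatorElement_def, hj, hjC]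
  change C.mulIndicator (const J ⁅a, b⁆) ∈ H
  rw [hcomm, commutatorElement_def]
  exact H.mul_mem (H.mul_mem (H.mul_mem (hconst a) hh) (H.inv_mem (hconst a))) (H.inv_mem hh)

theorem supportedSubgroup_le_of_mulIndicator_const_mem [Finite G] {H : Subgroup (J → G)}
    {A : Set J} (h : ∀ C ⊆ A, ∀ a : G, C.mulIndicator (const J a) ∈ H) :
    supportedSubgroup G A ≤ H := by
  intro g hg
  refine mem_of_forall_mulIndicator_preimage_mem g fun a => ?_
  have hlevel : (g ⁻¹' {a}).mulIndicator g = (A ∩ g ⁻¹' {a}).mulIndicator (const J a) := by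
    ext j
    by_cases hj : g j = a
    · by_cases hjA : j ∈ A
      · simp [hj, hjA]
      · simp [hjA, mulSupport_subset_iff'.1 (mem_supportedSubgroup.1 hg) j hjA]
    · simp [hj]
  rw [hlevel]
  exact h _ inter_subset_left a

theorem exists_forall_not_and_forall_subset_or_sdiff {P : ℕ → Set J → Prop}
    (hdisj : ∀ A : ℕ → Set J, Pairwise (Disjoint on A) → ∃ n, P n (A n))
    (huniv : ∀ n, ¬ P n univ) :
    ∃ B, (∀ n, ¬ P n B) ∧ ∃ m, ∀ A ⊆ B, P m A ∨ ∃ n, P n (B \ A) := by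
  by_contra! hfail
  choose! A hA using hfail
  -- The pieces `A (B n) n` removed from `univ` one after the other are disjoint and all bad.
  let B : ℕ → Set J := fun n => Nat.rec univ (fun k C => C \ A C k) n
  have hB : ∀ n, ∀ k, ¬ P k (B n) := fun n => by
    induction n with
    | zero => exact huniv
    | succ n ih => exact (hA (B n) ih n).2.2
  have hanti : Antitone B := antitone_nat_of_succ_le fun n => sdiff_subset
  obtain ⟨n, hn⟩ := hdisj (fun n => A (B n) n) <| (pairwise_disjoint_on _).2 fun m n hmn =>
    disjoint_sdiff_right.mono_right (((hA (B n) (hB n) n).1).trans (hanti (Nat.succ_le_of_lt hmn)))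
  exact (hA (B n) (hB n) n).2.1 hn

variable [Finite G]

theorem exists_supportedSubgroup_le (hG : commutator G = ⊤) {H : ℕ → Subgroup (J → G)}
    (hmono : Monotone H) (hcover : ∀ g : J → G, ∃ n, g ∈ H n)
    {A : ℕ → Set J} (hA : Pairwise (Disjoint on A)) :
    ∃ n m, supportedSubgroup G (A n) ≤ H m := by
  obtain ⟨n, hn⟩ := exists_forall_exists_eqOn_of_cover (H := fun n => (H n : Set (J → G))) hcover hA
  choose rank hrank using fun a : G => hcover ((A n).mulIndicator (const J a))
  obtain ⟨M, hM⟩ := Finite.exists_le rank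
  refine ⟨n, max n M, supportedSubgroup_le_of_mulIndicator_const_mem fun C hC =>
    mulIndicator_const_mem_of_commutator_eq_top hG (fun g => ?_) (fun a => ?_) hC⟩
  · exact (hn g).imp fun h hh => ⟨hmono (le_max_left n M) hh.1, hh.2⟩
  · exact hmono ((hM a).trans (le_max_right n M)) (hrank a)

theorem exists_supportedSubgroup_le_diagonal (hG : commutator G = ⊤) {H : ℕ → Subgroup (J → G)}
    (hmono : Monotone H) (hcover : ∀ g : J → G, ∃ n, g ∈ H n)
    {A : ℕ → Set J} (hA : Pairwise (Disjoint on A)) :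
    ∃ n, supportedSubgroup G (A n) ≤ H n := by
  -- Grouping the sets by the first component leaves a set `A k` with `k ≥ m` in the group found.
  obtain ⟨n, m, h⟩ := exists_supportedSubgroup_le hG hmono hcover
    (A := fun n => ⋃ m, A (Nat.pair n m)) fun n n' hne => by
      refine disjoint_iUnion_left.2 fun m => disjoint_iUnion_right.2 fun m' => hA ?_
      exact fun heq => hne (Nat.pair_eq_pair.1 heq).1
  exact ⟨Nat.pair n m, ((supportedSubgroup_mono (subset_iUnion _ m)).trans h).trans
    (hmono (Nat.right_le_pair n m))⟩

theorem exists_supportedSubgroup_le_of_forall_subset {H : ℕ → Subgroup (J → G)}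
    (hmono : Monotone H) (hcover : ∀ g : J → G, ∃ n, g ∈ H n) {B : Set J} {m : ℕ}
    (hB : ∀ A ⊆ B, supportedSubgroup G A ≤ H m ∨ ∃ n, supportedSubgroup G (B \ A) ≤ H n) :
    ∃ n, supportedSubgroup G B ≤ H n := by
  by_contra! hlarge
  choose rank hrank using fun a : G => hcover (B.mulIndicator (const J a))
  obtain ⟨M, hM⟩ := Finite.exists_le rank
  refine hlarge (max m M) fun g hg => ?_
  obtain ⟨a, ha⟩ : ∃ a, ∀ n, ¬ supportedSubgroup G (B ∩ g ⁻¹' {a}) ≤ H n := by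
    by_contra! hsmall
    choose r hr using hsmall
    obtain ⟨R, hR⟩ := Finite.exists_le r
    exact hlarge R (supportedSubgroup_le_of_forall_inter_preimage g
      fun a => (hr a).trans (hmono (hR a)))
  have hrest : supportedSubgroup G (B \ g ⁻¹' {a}) ≤ H m :=
    (hB _ sdiff_subset).resolve_right fun ⟨n, hn⟩ => ha n (by rwa [sdiff_sdiff_right_self] at hn)
  have hquot : (B.mulIndicator (const J a))⁻¹ * g ∈ supportedSubgroup G (B \ g ⁻¹' {a}) := by
    rw [mem_supportedSubgroup, mulSupport_subset_iff'] at hg ⊢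
    intro j hj
    by_cases hjB : j ∈ B
    · have hga : g j = a := by_contra fun hne => hj ⟨hjB, hne⟩
      simp [hjB, hga]
    · simp [hjB, hg j hjB]
  rw [← (H (max m M)).mul_mem_cancel_left (inv_mem
    (hmono ((hM a).trans (le_max_right m M)) (hrank a)))]
  exact hmono (le_max_left m M) (hrest hquot)

theorem exists_eq_top_of_monotone_of_cover (hG : commutator G = ⊤) {H : ℕ → Subgroup (J → G)}
    (hmono : Monotone H) (hcover : ∀ g : J → G, ∃ n, g ∈ H n) : ∃ n, H n = ⊤ := by
  by_contra! hproper
  obtain ⟨B, hlarge, m, hB⟩ := exists_forall_not_and_forall_subset_or_sdiff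
    (P := fun n A => supportedSubgroup G A ≤ H n)
    (fun A hA => exists_supportedSubgroup_le_diagonal hG hmono hcover hA)
    (fun n h => hproper n (top_le_iff.1 (supportedSubgroup_univ.symm.trans_le h)))
  obtain ⟨n, hn⟩ := exists_supportedSubgroup_le_of_forall_subset hmono hcover hB
  exact hlarge n hn

end CountableChains

section SeparableProducts

open TopologicalSpace

variable {ι : Type*} {X : ι → Type*} [∀ i, TopologicalSpace (X i)] [∀ i, SeparableSpace (X i)]

theorem eventually_injOn_domRestrict_Iio {α : Type*} {s : Set (ℕ → α)} (hs : s.Finite) :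
    ∀ᶠ n in atTop, InjOn (Iio n).domRestrict s := by
  have hpair : ∀ x ∈ s, ∀ y ∈ s, ∀ᶠ n in atTop,
      (Iio n).domRestrict x = (Iio n).domRestrict y → x = y := fun x _ y _ => by
    by_cases hxy : x = y
    · exact .of_forall fun _ _ => hxy
    · obtain ⟨k, hk⟩ := ne_iff.1 hxy
      filter_upwards [eventually_gt_atTop k] with n hn heq
      exact (hk (congrFun heq ⟨k, hn⟩)).elim
  filter_upwards [(eventually_all_finite hs).2 fun x hx =>
    (eventually_all_finite hs).2 (hpair x hx)] with n hn x hx y hy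
  exact hn x hx y hy

-- At the coordinate `i` a point of the dense family depends only on a finite prefix of `e i`;
-- long prefixes tell any finitely many coordinates apart.
theorem separableSpace_pi_of_injective {α : Type*} [Finite α] {e : ι → ℕ → α} (he : Injective e) :
    SeparableSpace (∀ i, X i) := by
  classical
  rcases isEmpty_or_nonempty (∀ i, X i) with hX | hX
  · infer_instance
  have := Classical.nonempty_pi.1 hX
  let d : (Σ n : ℕ, (Iio n → α) → ℕ) → ∀ i, X i :=
    fun φ i => denseSeq (X i) (φ.2 ((Iio φ.1).domRestrict (e i)))
  refine .of_denseRange d (dense_iff_inter_open.2 ?_)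
  rintro U hU ⟨x, hx⟩
  obtain ⟨I, V, hV, hVU⟩ := isOpen_pi_iff.1 hU x hx
  obtain ⟨n, hn⟩ := (eventually_injOn_domRestrict_Iio (I.finite_toSet.image e)).exists
  have hinj : Injective fun i : I => (Iio n).domRestrict (e i) := fun i j hij =>
    Subtype.ext (he (hn (mem_image_of_mem e i.2) (mem_image_of_mem e j.2) hij))
  choose k hk using fun i : I =>
    (denseRange_denseSeq (X i)).exists_mem_open (hV i i.2).1 ⟨x i, (hV i i.2).2⟩
  refine ⟨d ⟨n, extend (fun i : I => (Iio n).domRestrict (e i)) k 0⟩,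
    hVU fun i hi => ?_, mem_range_self _⟩
  simpa only [d, hinj.extend_apply k 0 ⟨i, hi⟩] using hk ⟨i, hi⟩

-- The Hewitt–Marczewski–Pondiczery theorem.
theorem separableSpace_pi_of_mk_le_continuum (hι : #ι ≤ 𝔠) : SeparableSpace (∀ i, X i) := by
  have hcard : Cardinal.lift.{0} #ι ≤ Cardinal.lift #(ℕ → Bool) := by simpa using hι
  obtain ⟨e⟩ := Cardinal.lift_mk_le'.1 hcard
  exact separableSpace_pi_of_injective e.injective

end SeparableProducts

section CylinderKernels

variable {ι X Z : Type*} {p : X → ι → Z} {A B : Set ι} {U : Set X}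

/-- The points `y` such that every `x` for which `p x` agrees with `y` on the coordinates in `A`
lies in `U`. It is the largest union of cylinders over `A` inside `kernImage p U`; it records where
membership in `U` can be read off from the coordinates in `A` alone. -/
def cylinderKernel (p : X → ι → Z) (A : Set ι) (U : Set X) : Set (ι → Z) :=
  {y | ∀ x, EqOn (p x) y A → x ∈ U}

theorem cylinderKernel_mono (hAB : A ⊆ B) : cylinderKernel p A U ⊆ cylinderKernel p B U :=
  fun _ hy x hx => hy x (hx.mono hAB)

variable [TopologicalSpace X] [TopologicalSpace Z]

theorem isOpen_cylinderKernel [CompactSpace X] [T2Space Z] (hp : Continuous p) (hU : IsOpen U) :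
    IsOpen (cylinderKernel p A U) := by
  have hclosed : IsClosedMap (A.domRestrict ∘ p) :=
    ((Pi.continuous_domRestrict A).comp hp).isClosedMap
  have hpre : cylinderKernel p A U = A.domRestrict ⁻¹' kernImage (A.domRestrict ∘ p) U := by
    ext y
    simp only [cylinderKernel, kernImage, mem_ofPred_eq, mem_preimage, comp_apply,
      domRestrict_eq_domRestrict_iff]
  rw [hpre]
  exact (isClosedMap_iff_kernImage.1 hclosed hU).preimage (Pi.continuous_domRestrict A)

theorem exists_countable_dense_iUnion_cylinderKernel [TopologicalSpace.SeparableSpace (ι → Z)]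
    {κ : Type*} (hp : IsClosedMap p) {V : κ → Set X} (hV : ∀ a, IsOpen (V a))
    (hdense : Dense (⋃ a, kernImage p (V a))) :
    ∃ A : Set ι, A.Countable ∧ Dense (⋃ a, cylinderKernel p A (V a)) := by
  obtain ⟨S, hScount, hS⟩ := TopologicalSpace.exists_countable_dense (ι → Z)
  have hopen : ∀ a, IsOpen (kernImage p (V a)) := fun a => isClosedMap_iff_kernImage.1 hp (hV a)
  have hsupport : ∀ y ∈ ⋃ a, kernImage p (V a), ∃ I : Finset ι,
      ∃ a, y ∈ cylinderKernel p I (V a) := fun y hy => by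
    obtain ⟨a, ha⟩ := mem_iUnion.1 hy
    obtain ⟨I, W, hW, hWV⟩ := isOpen_pi_iff.1 (hopen a) y ha
    exact ⟨I, a, fun x hx => hWV (fun i hi => hx hi ▸ (hW i hi).2) rfl⟩
  choose! I hI using hsupport
  refine ⟨⋃ y ∈ S, I y, hScount.biUnion fun y _ => (I y).countable_toSet,
    (hS.inter_of_isOpen_right hdense (isOpen_iUnion hopen)).mono fun y hy => ?_⟩
  obtain ⟨a, ha⟩ := hI y hy.2
  exact mem_iUnion.2 ⟨a, cylinderKernel_mono (subset_biUnion_of_mem hy.1) ha⟩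

end CylinderKernels

theorem dense_iUnion_kernImage {X Y : Type u} [TopologicalSpace X] [TopologicalSpace Y] {p : X → Y}
    (hp : Continuous p) (hsurj : Surjective p)
    (hirr : ∀ C : Set X, C ≠ univ → IsClosed C → p '' C ≠ univ)
    {κ : Type*} {V : κ → Set X} (hV : ∀ a, IsOpen (V a)) (hcover : ⋃ a, V a = univ) :
    Dense (⋃ a, kernImage p (V a)) := by
  refine dense_iff_closure_eq.2 (univ_subset_iff.1 ?_)
  rw [← image_univ_of_surjective hsurj, ← hcover, image_iUnion]
  refine iUnion_subset fun a =>
    (image_subset_closure_compl_image_compl_of_isOpen hp hsurj hirr (hV a)).trans (closure_mono ?_)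
  rw [← kernImage_eq_compl]
  exact subset_iUnion (fun a => kernImage p (V a)) a

section DecidedSubgroups

variable {E ι J Z G : Type*}

/-- The points of `ι → Z` whose coordinates in `A` decide the limit of `g : J → G` (in the discrete
`G`): all the ultrafilters `q x` for which `p x` agrees with the point on `A` give `g` the same
limit. -/
def decidedSet (q : E → Ultrafilter J) (p : E → ι → Z) (A : Set ι) (g : J → G) : Set (ι → Z) :=
  ⋃ a, cylinderKernel p A {x | ∀ᶠ j in q x, g j = a}

variable [TopologicalSpace E] [TopologicalSpace Z]

theorem isOpen_setOf_eventually_eq {q : E → Ultrafilter J} (hq : Continuous q) (g : J → G) (a : G) :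
    IsOpen {x | ∀ᶠ j in q x, g j = a} :=
  (ultrafilter_isOpen_basic {j | g j = a}).preimage hq

variable [CompactSpace E] [T2Space Z]

theorem isOpen_decidedSet {q : E → Ultrafilter J} (hq : Continuous q) {p : E → ι → Z}
    (hp : Continuous p) (A : Set ι) (g : J → G) : IsOpen (decidedSet q p A g) :=
  isOpen_iUnion fun a => isOpen_cylinderKernel hp (isOpen_setOf_eventually_eq hq g a)

variable [Group G]

variable (G) in
/-- The functions `g : J → G` whose limits along the ultrafilters `q x` are decided by the
coordinates in `A` of almost every (in the sense of an open dense set) point of `ι → Z`. -/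
def decidedSubgroup (q : C(E, Ultrafilter J)) (p : C(E, ι → Z)) (A : Set ι) :
    Subgroup (J → G) where
  carrier := {g | Dense (decidedSet q p A g)}
  one_mem' := dense_univ.mono fun _ _ =>
    mem_iUnion.2 ⟨1, fun _ _ => Eventually.of_forall fun _ => rfl⟩
  mul_mem' {g h} hg hh := by
    refine (hg.inter_of_isOpen_left hh
      (isOpen_decidedSet q.continuous p.continuous A g)).mono fun y hy => ?_
    obtain ⟨a, ha⟩ := mem_iUnion.1 hy.1
    obtain ⟨b, hb⟩ := mem_iUnion.1 hy.2
    exact mem_iUnion.2 ⟨a * b, fun x hx => EventuallyEq.mul (ha x hx) (hb x hx)⟩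
  inv_mem' {g} hg := hg.mono fun y hy => by
    obtain ⟨a, ha⟩ := mem_iUnion.1 hy
    exact mem_iUnion.2 ⟨a⁻¹, fun x hx => EventuallyEq.inv (ha x hx)⟩

variable {q : C(E, Ultrafilter J)} {p : C(E, ι → Z)} {A B : Set ι}

theorem mem_decidedSubgroup {g : J → G} :
    g ∈ decidedSubgroup G q p A ↔ Dense (decidedSet q p A g) :=
  Iff.rfl

theorem decidedSubgroup_mono (hAB : A ⊆ B) : decidedSubgroup G q p A ≤ decidedSubgroup G q p B :=
  fun _ hg => (mem_decidedSubgroup.1 hg).mono (iUnion_mono fun _ => cylinderKernel_mono hAB)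

theorem decidedSubgroup_ne_top [Nontrivial G] [Nontrivial Z] (hp : Surjective p) {d : J → ι → Z}
    (hd : ∀ x i, ∀ᶠ j in q x, d j i = p x i) {i : ι} (hi : i ∉ A) :
    decidedSubgroup G q p A ≠ ⊤ := by
  classical
  intro htop
  obtain ⟨z₀, z₁, hz⟩ := exists_pair_ne Z
  obtain ⟨a₀, a₁, ha⟩ := exists_pair_ne G
  let f : Z → G := update (const Z a₁) z₀ a₀
  have hmem : (fun j => f (d j i)) ∈ decidedSubgroup G q p A := htop ▸ Subgroup.mem_top _
  obtain ⟨y, hy⟩ := (mem_decidedSubgroup.1 hmem).nonempty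
  obtain ⟨a, hya⟩ := mem_iUnion.1 hy
  have hconst : ∀ z, f z = a := fun z => by
    obtain ⟨x, hx⟩ := hp (update y i z)
    have hagree : EqOn (p x) y A := fun k hk => by
      rw [hx, update_of_ne (ne_of_mem_of_not_mem hk hi)]
    obtain ⟨j, hja, hjd⟩ := ((hya x hagree).and (hd x i)).exists
    rw [← hja, ← update_self i z y, ← hx, ← hjd]
  refine ha ?_
  calc a₀ = f z₀ := (update_self z₀ a₀ (const Z a₁)).symm
    _ = f z₁ := (hconst z₀).trans (hconst z₁).symm
    _ = a₁ := update_of_ne hz.symm a₀ (const Z a₁)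

end DecidedSubgroups

theorem exists_countable_mem_decidedSubgroup {ι : Type u} {Z : Type v} {E : Type (max u v)}
    {J G : Type*} [TopologicalSpace E] [CompactSpace E]
    [TopologicalSpace Z] [T2Space Z] [TopologicalSpace.SeparableSpace (ι → Z)]
    [Group G] [Finite G] {q : C(E, Ultrafilter J)} {p : C(E, ι → Z)}
    (hp : Surjective p) (hirr : ∀ C : Set E, C ≠ univ → IsClosed C → p '' C ≠ univ) (g : J → G) :
    ∃ A : Set ι, A.Countable ∧ g ∈ decidedSubgroup G q p A := by
  have hopen := isOpen_setOf_eventually_eq q.continuous g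
  refine exists_countable_dense_iUnion_cylinderKernel p.continuous.isClosedMap hopen
    (dense_iUnion_kernImage p.continuous hp hirr hopen ?_)
  exact iUnion_eq_univ_iff.2 fun x =>
    Ultrafilter.eventually_exists_iff.1 (.of_forall fun j => ⟨g j, rfl⟩)

section Ultrafilters

variable {J Y : Type*} [TopologicalSpace Y]

theorem exists_denseRange [Infinite J] [TopologicalSpace.SeparableSpace Y] [Nonempty Y] :
    ∃ d : J → Y, DenseRange d :=
  ⟨_, (TopologicalSpace.denseRange_denseSeq Y).comp
    (invFun_surjective (Infinite.natEmbedding J).injective).denseRange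
    continuous_of_discreteTopology⟩

theorem surjective_extend_of_denseRange [CompactSpace Y] [T2Space Y] {d : J → Y}
    (hd : DenseRange d) : Surjective (Ultrafilter.extend d) := by
  have hsub : range d ⊆ range (Ultrafilter.extend d) :=
    range_subset_iff.2 fun j => ⟨pure j, congrFun (ultrafilter_extend_extends d) j⟩
  exact range_eq_univ.1 <| (isCompact_range (continuous_ultrafilter_extend d)).isClosed.closure_eq ▸
    (hd.mono hsub).closure_eq

theorem eventually_apply_eq_extend {ι Z : Type*} [TopologicalSpace Z] [DiscreteTopology Z]
    [CompactSpace Z] (d : J → ι → Z) (u : Ultrafilter J) (i : ι) :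
    ∀ᶠ j in u, d j i = Ultrafilter.extend d u i := by
  have hlim : Tendsto d u (𝓝 (Ultrafilter.extend d u)) := ultrafilter_extend_eq_iff.1 rfl
  simpa only [nhds_discrete, tendsto_pure] using tendsto_pi_nhds.1 hlim i

end Ultrafilters

theorem exists_forall_lt_of_countable {ι : Type*} [LinearOrder ι] (hι : ℵ₀ < Order.cof ι)
    {A : Set ι} (hA : A.Countable) : ∃ i, ∀ k ∈ A, k < i :=
  not_isCofinal_iff.1 fun hcof =>
    ((Order.cof_le hcof).trans hA.le_aleph0).not_gt hι

theorem exists_monotone_cover_of_aleph0_lt_cof {ι : Type u} {J : Type v} {G : Type*} [LinearOrder ι]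
    [Infinite J] [Group G] [Finite G] [Nontrivial G] (hcard : #ι ≤ 𝔠) (hcof : ℵ₀ < Order.cof ι) :
    ∃ H : ι → Subgroup (J → G), Monotone H ∧ (∀ i, H i ≠ ⊤) ∧ ∀ g, ∃ i, g ∈ H i := by
  -- The lifts bring both spaces into one universe, as the passage to an irreducible map requires.
  have : TopologicalSpace.SeparableSpace (ι → ULift.{v} Bool) :=
    separableSpace_pi_of_mk_le_continuum hcard
  obtain ⟨d, hd⟩ := exists_denseRange (J := J) (Y := ι → ULift.{v} Bool)
  have hcont : Continuous fun u : ULift.{u} (Ultrafilter J) => Ultrafilter.extend d u.down :=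
    (continuous_ultrafilter_extend d).comp continuous_uliftDown
  obtain ⟨E, hE, himage, hirr⟩ := exists_compact_surjective_zorn_subset hcont
    ((surjective_extend_of_denseRange hd).comp ULift.down_surjective)
  let q : C(E, Ultrafilter J) :=
    ⟨fun x => x.1.down, continuous_uliftDown.comp continuous_subtype_val⟩
  let p : C(E, ι → ULift.{v} Bool) := ⟨_, hcont.comp continuous_subtype_val⟩
  have hsurj : Surjective p := range_eq_univ.1 ((range_domRestrict _ E).trans himage)
  refine ⟨fun i => decidedSubgroup G q p (Iio i),
    fun i j hij => decidedSubgroup_mono (Iio_subset_Iio hij),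
    fun i => decidedSubgroup_ne_top hsurj (fun x i => eventually_apply_eq_extend d (q x) i)
      self_notMem_Iio, fun g => ?_⟩
  obtain ⟨A, hA, hg⟩ := exists_countable_mem_decidedSubgroup hsurj hirr g
  obtain ⟨i, hi⟩ := exists_forall_lt_of_countable hcof hA
  exact ⟨i, decidedSubgroup_mono hi hg⟩

theorem stmt_1_general (J : Type*) [Infinite J] (F : Type*) [Group F] [Finite F] [Nontrivial F]
    (hF : commutator F = ⊤) :
    (¬ ∃ H : ℕ → Subgroup (J → F),
        Monotone H ∧ (∀ n, H n ≠ ⊤) ∧ ∀ g : J → F, ∃ n, g ∈ H n) ∧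
    (∃ H : Set.Iio (Cardinal.aleph 1).ord → Subgroup (J → F),
        Monotone H ∧ (∀ i, H i ≠ ⊤) ∧ ∀ g : J → F, ∃ i, g ∈ H i) := by
  constructor
  · rintro ⟨H, hmono, hproper, hcover⟩
    obtain ⟨n, hn⟩ := exists_eq_top_of_monotone_of_cover hF hmono hcover
    exact hproper n hn
  · exact exists_monotone_cover_of_aleph0_lt_cof
      (by simpa using Cardinal.aleph_one_le_continuum)
      (by simp)

/-- If `F` is a nontrivial finite perfect group then `c(∏ n : ℕ, F) = ω₁`:
the product has no countable increasing chain of proper subgroups with union everything,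
but it has such a chain indexed by the ordinals below `ω₁`. -/
theorem stmt_1 (F : Type*) [Group F] [Finite F] [Nontrivial F]
    (hF : commutator F = ⊤) :
    (¬ ∃ H : ℕ → Subgroup (ℕ → F),
        Monotone H ∧ (∀ n, H n ≠ ⊤) ∧ ∀ g : ℕ → F, ∃ n, g ∈ H n) ∧
    (∃ H : Set.Iio (Cardinal.aleph 1).ord → Subgroup (ℕ → F),
        Monotone H ∧ (∀ i, H i ≠ ⊤) ∧ ∀ g : ℕ → F, ∃ i, g ∈ H i) :=
  stmt_1_general ℕ F hF
end

section
/- Fix an integer d ≥ 2 and let (q_n)_{n∈ℕ} be a strictly increasing sequence of prime powers. Then c(∏_{n∈ℕ} SL(d, GF(q_n))) = ω; that is, the full direct product ∏_n SL_d(GF(q_n)) of the special linear groups of degree d over the finite fields with q_n elements can be written as the union of a strictly increasing countable chain (H_t)_{t∈ℕ} of proper subgroups. -/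
/-!
The product ring `∏ Fₙ` maps onto a nonprincipal ultraproduct, which is a domain, and uncountable
by diagonalization because the cardinalities of the factors are unbounded. An uncountable domain
has an infinite transcendence basis `B` over its prime ring; writing `B` as the union of a strictly
increasing sequence of subsets `Bₜ` and taking the elements algebraic over `Bₜ` exhausts the domain
by subrings. Pulling these back to `∏ Fₙ` and taking the matrices with entries in the resulting
subrings exhausts `SL(d, ∏ Fₙ) ≃ ∏ SL(d, Fₙ)` by subgroups, strictly because of the transvections.
-/

open Filter Matrix Set

/-- `S` is a strictly increasing countable chain of sets whose union is `E`. A group has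
cofinality `ω` when it is exhausted in this sense by its subgroups; these, as well as subrings and
flats of matroids, are considered through their underlying sets. -/
structure IsStrictExhaustion {α : Type*} (S : ℕ → Set α) (E : Set α) : Prop where
  strictMono : StrictMono S
  iUnion_eq : ⋃ t, S t = E

namespace IsStrictExhaustion

variable {α β : Type*} {S : ℕ → Set α} {E : Set α}

theorem subset (hS : IsStrictExhaustion S E) (t : ℕ) : S t ⊆ E :=
  (subset_iUnion S t).trans_eq hS.iUnion_eq

theorem exists_superset_of_finite (hS : IsStrictExhaustion S E) {s : Set α} (hs : s.Finite)
    (hsE : s ⊆ E) : ∃ t, s ⊆ S t := by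
  lift s to Finset α using hs
  exact hS.strictMono.monotone.directed_le.exists_mem_subset_of_finset_subset_biUnion
    (hsE.trans_eq hS.iUnion_eq.symm)

theorem preimage (hS : IsStrictExhaustion S E) {f : β → α} (hf : f.Surjective) :
    IsStrictExhaustion (fun t => f ⁻¹' S t) (f ⁻¹' E) where
  strictMono :=
    (monotone_preimage.strictMono_of_injective hf.preimage_injective).comp hS.strictMono
  iUnion_eq := by rw [← preimage_iUnion, hS.iUnion_eq]

theorem image (hS : IsStrictExhaustion S E) {f : α → β} (hf : f.Injective) :
    IsStrictExhaustion (fun t => f '' S t) (f '' E) where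
  strictMono := hf.image_strictMono.comp hS.strictMono
  iUnion_eq := by rw [← image_iUnion, hS.iUnion_eq]

theorem nat_Iio : IsStrictExhaustion (Iio : ℕ → Set ℕ) univ where
  strictMono _ _ := Iio_ssubset_Iio
  iUnion_eq := iUnion_Iio

theorem exists_of_infinite (hE : E.Infinite) : ∃ S, IsStrictExhaustion S E := by
  have := hE.to_subtype
  obtain ⟨rank, hrank⟩ : ∃ rank : E → ℕ, rank.Surjective :=
    ⟨_, Function.invFun_surjective (Infinite.natEmbedding E).injective⟩
  have hT := (nat_Iio.preimage hrank).image (Subtype.val_injective (p := (· ∈ E)))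
  rw [preimage_univ, image_univ, Subtype.range_val] at hT
  exact ⟨_, hT⟩

theorem matroid_closure {M : Matroid α} [M.Finitary] (hS : IsStrictExhaustion S E)
    (hE : M.IsBase E) : IsStrictExhaustion (fun t => M.closure (S t)) M.E where
  strictMono s t hst :=
    (hE.indep.subset (hS.subset t)).closure_ssubset_closure (hS.strictMono hst)
  iUnion_eq := by
    refine (iUnion_subset fun t => M.closure_subset_ground _).antisymm fun x hx => ?_
    rw [← hE.closure_eq] at hx
    obtain ⟨I, hIE, hI, -, hxI⟩ := Matroid.exists_mem_finite_closure_of_mem_closure hx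
    obtain ⟨t, ht⟩ := hS.exists_superset_of_finite hI hIE
    exact mem_iUnion_of_mem t (M.closure_subset_closure ht hxI)

theorem strictMono_and_ne_top_and_exists_mem {G : Type*} [Group G] {H : ℕ → Subgroup G}
    (hH : IsStrictExhaustion (fun t => (H t : Set G)) univ) :
    StrictMono H ∧ (∀ t, H t ≠ ⊤) ∧ ∀ g, ∃ t, g ∈ H t := by
  have hmono : StrictMono H := fun _ _ hst => SetLike.coe_ssubset_coe.mp (hH.strictMono hst)
  exact ⟨hmono, fun t => ((hmono t.lt_succ_self).trans_le le_top).ne,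
    fun g => mem_iUnion.mp (hH.iUnion_eq ▸ mem_univ g)⟩

end IsStrictExhaustion

section TranscendenceBasis

variable {R A : Type*} [CommRing R] [CommRing A] [IsDomain A] [Algebra R A]

theorem exists_subalgebra_isStrictExhaustion {B : Set A}
    (hB : IsTranscendenceBasis R ((↑) : B → A)) (hinf : B.Infinite) :
    ∃ S : ℕ → Subalgebra R A, IsStrictExhaustion (fun t => (S t : Set A)) univ := by
  have : FaithfulSMul R A :=
    (faithfulSMul_iff_algebraMap_injective R A).mpr hB.1.algebraMap_injective
  obtain ⟨T, hT⟩ := IsStrictExhaustion.exists_of_infinite hinf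
  have hS := hT.matroid_closure (AlgebraicIndependent.matroid_isBase_iff.mpr hB)
  simp only [AlgebraicIndependent.matroid_closure_eq, AlgebraicIndependent.matroid_e] at hS
  exact ⟨fun t => (Subalgebra.algebraicClosure (Algebra.adjoin R (T t)) A).restrictScalars R, hS⟩

theorem countable_of_isTranscendenceBasis [Countable R] {ι : Type*} [Countable ι] {x : ι → A}
    (hx : IsTranscendenceBasis R x) : Countable A := by
  have := (algebraMap R A).domain_nontrivial
  have : Countable (MvPolynomial ι R) := AddMonoidAlgebra.coeff_injective.countable
  have : Countable (Algebra.adjoin R (range x)) := hx.1.aevalEquiv.symm.injective.countable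
  have := hx.isAlgebraic
  rw [← countable_univ_iff]
  simpa [Algebra.IsAlgebraic.isAlgebraic] using
    Algebraic.countable (Algebra.adjoin R (range x)) A

theorem exists_subring_isStrictExhaustion [Uncountable A] :
    ∃ S : ℕ → Subring A, IsStrictExhaustion (fun t => (S t : Set A)) univ := by
  have : Countable (⊥ : Subring A) :=
    (Subring.coe_bot (R := A) ▸ countable_range _ : ((⊥ : Subring A) : Set A).Countable)
  obtain ⟨B, hB⟩ := exists_isTranscendenceBasis (⊥ : Subring A) A
  have hinf : B.Infinite := by
    intro hfin
    have := hfin.countable.to_subtype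
    exact not_countable (countable_of_isTranscendenceBasis hB)
  obtain ⟨S, hS⟩ := exists_subalgebra_isStrictExhaustion hB hinf
  exact ⟨fun t => (S t).toSubring, hS⟩

end TranscendenceBasis

section Ultraproduct

variable {ι : Type*} {R : ι → Type*}

theorem exists_forall_lt_apply_ne (N : ι → ℕ) (hN : ∀ i, N i < ENat.card (R i))
    (f : ℕ → ∀ i, R i) : ∃ g : ∀ i, R i, ∀ i, ∀ k < N i, f k i ≠ g i := by
  have exists_notMem (i : ι) : ∃ y, y ∉ (fun k => f k i) '' Iio (N i) := by
    rw [← ne_univ_iff_exists_notMem]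
    intro h
    refine (hN i).not_ge ?_
    calc ENat.card (R i) = ((fun k => f k i) '' Iio (N i)).encard := by rw [h, encard_univ]
      _ ≤ (Iio (N i)).encard := encard_image_le _ _
      _ = N i := by rw [← Finset.coe_Iio, encard_coe_eq_coe_finsetCard, Nat.card_Iio]
  choose g hg using exists_notMem
  exact ⟨g, fun i k hk h => hg i ⟨k, hk, h⟩⟩

variable [∀ i, CommRing (R i)]

variable (R) in
/-- The ideal of families that vanish eventually along `l`. The quotient by it is the reduced
product of the `R i` along `l`, which is their ultraproduct when `l` is an ultrafilter. -/
def eventuallyZeroIdeal (l : Filter ι) : Ideal (∀ i, R i) where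
  carrier := {f | ∀ᶠ i in l, f i = 0}
  zero_mem' := .of_forall fun _ => rfl
  add_mem' hf hg := by
    filter_upwards [hf, hg] with i hfi hgi
    simp only [Pi.add_apply, hfi, hgi, add_zero]
  smul_mem' c f hf := by
    filter_upwards [hf] with i hfi
    simp only [smul_eq_mul, Pi.mul_apply, hfi, mul_zero]

theorem mem_eventuallyZeroIdeal {l : Filter ι} {f : ∀ i, R i} :
    f ∈ eventuallyZeroIdeal R l ↔ ∀ᶠ i in l, f i = 0 :=
  Iff.rfl

theorem isPrime_eventuallyZeroIdeal [∀ i, IsDomain (R i)] (U : Ultrafilter ι) :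
    (eventuallyZeroIdeal R U).IsPrime := by
  refine Ideal.isPrime_iff.mpr ⟨?_, fun {f g} hfg => ?_⟩
  · simp [Ideal.ne_top_iff_one, mem_eventuallyZeroIdeal, U.neBot.ne]
  · simpa [mem_eventuallyZeroIdeal, Ultrafilter.eventually_or] using hfg

theorem uncountable_quotient_eventuallyZeroIdeal {l : Filter ι} [l.NeBot] {N : ι → ℕ}
    (hNl : Tendsto N l atTop) (hNR : ∀ i, N i < ENat.card (R i)) :
    Uncountable ((∀ i, R i) ⧸ eventuallyZeroIdeal R l) := by
  rw [← not_countable_iff]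
  intro _
  obtain ⟨e, he⟩ := exists_surjective_nat ((∀ i, R i) ⧸ eventuallyZeroIdeal R l)
  choose f hf using fun k => Ideal.Quotient.mk_surjective (e k)
  obtain ⟨g, hg⟩ := exists_forall_lt_apply_ne N hNR f
  obtain ⟨k, hk⟩ := he (Ideal.Quotient.mk _ g)
  rw [← hf k, Ideal.Quotient.eq, mem_eventuallyZeroIdeal] at hk
  obtain ⟨i, hi, hki⟩ := (hk.and (hNl.eventually_gt_atTop k)).exists
  exact hg i k hki (sub_eq_zero.mp hi)

theorem exists_ultrafilter_tendsto_atTop {N : ι → ℕ} (hN : ¬ BddAbove (range N)) :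
    ∃ U : Ultrafilter ι, Tendsto N U atTop := by
  have : (comap N atTop).NeBot :=
    comap_neBot_iff_frequently.mpr <| frequently_atTop'.mpr fun k => by
      obtain ⟨n, hn, hkn⟩ := not_bddAbove_iff.mp hN k
      exact ⟨n, hkn, hn⟩
  exact ⟨.of (comap N atTop), tendsto_comap.mono_left (Ultrafilter.of_le _)⟩

theorem exists_subring_pi_isStrictExhaustion [∀ i, IsDomain (R i)] {N : ι → ℕ}
    (hN : ¬ BddAbove (range N)) (hNR : ∀ i, N i < ENat.card (R i)) :
    ∃ S : ℕ → Subring (∀ i, R i), IsStrictExhaustion (fun t => (S t : Set (∀ i, R i))) univ := by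
  obtain ⟨U, hU⟩ := exists_ultrafilter_tendsto_atTop hN
  have := isPrime_eventuallyZeroIdeal (R := R) U
  have := uncountable_quotient_eventuallyZeroIdeal hU hNR
  obtain ⟨S, hS⟩ := exists_subring_isStrictExhaustion (A := (∀ i, R i) ⧸ eventuallyZeroIdeal R U)
  exact ⟨fun t => (S t).comap (Ideal.Quotient.mk (eventuallyZeroIdeal R U)),
    hS.preimage Ideal.Quotient.mk_surjective⟩

end Ultraproduct

section SpecialLinearGroup

variable {m : Type*} [Fintype m] [DecidableEq m] {A : Type*} [CommRing A]

variable (m) in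
/-- The subgroup of `SL(m, A)` of the matrices with entries in `S`. -/
def entrySubgroup (S : Subring A) : Subgroup (SpecialLinearGroup m A) :=
  (SpecialLinearGroup.map S.subtype).range

theorem mem_entrySubgroup {S : Subring A} {g : SpecialLinearGroup m A} :
    g ∈ entrySubgroup m S ↔ ∀ i j, g i j ∈ S := by
  constructor
  · rintro ⟨h, rfl⟩ i j
    exact (h i j).2
  · intro hg
    let h : Matrix m m S := .of fun i j => ⟨g i j, hg i j⟩
    have hdet : h.det = 1 := Subtype.val_injective <| (S.subtype.map_det h).trans g.det_coe
    exact ⟨⟨h, hdet⟩, rfl⟩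

theorem transvection_mem_entrySubgroup_iff {S : Subring A} {i j : m} (hij : i ≠ j) {a : A} :
    SpecialLinearGroup.transvection hij a ∈ entrySubgroup m S ↔ a ∈ S := by
  constructor
  · intro h
    simpa [SpecialLinearGroup.transvection_coe, hij] using mem_entrySubgroup.mp h i j
  · intro ha
    refine ⟨SpecialLinearGroup.transvection hij ⟨a, ha⟩, ?_⟩
    ext k l
    simp [SpecialLinearGroup.transvection_coe, single_apply, one_apply, apply_ite Subtype.val]

theorem IsStrictExhaustion.entrySubgroup [Nontrivial m] {S : ℕ → Subring A}
    (hS : IsStrictExhaustion (fun t => (S t : Set A)) univ) :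
    IsStrictExhaustion (fun t => (entrySubgroup m (S t) : Set (SpecialLinearGroup m A))) univ where
  strictMono s t hst := by
    obtain ⟨hle, a, hat, has⟩ := ssubset_iff_exists.mp (hS.strictMono hst)
    obtain ⟨i, j, hij⟩ := exists_pair_ne m
    refine ssubset_iff_exists.mpr ⟨fun g hg => ?_, SpecialLinearGroup.transvection hij a, ?_, ?_⟩
    · exact mem_entrySubgroup.mpr fun i j => hle (mem_entrySubgroup.mp hg i j)
    · exact (transvection_mem_entrySubgroup_iff hij).mpr hat
    · exact (transvection_mem_entrySubgroup_iff hij).not.mpr has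
  iUnion_eq := by
    refine eq_univ_of_forall fun g => ?_
    have hfin : (range fun p : m × m => g p.1 p.2).Finite := finite_range _
    obtain ⟨t, ht⟩ := hS.exists_superset_of_finite hfin (subset_univ _)
    exact mem_iUnion_of_mem t (mem_entrySubgroup.mpr fun i j => ht ⟨(i, j), rfl⟩)

variable (m) in
/-- The isomorphism `∏ SL(m, R i) ≃ SL(m, ∏ R i)`, which regards a family of matrices as a matrix
of families. -/
def specialLinearGroupPi {ι : Type*} (R : ι → Type*) [∀ i, CommRing (R i)] :
    (∀ i, SpecialLinearGroup m (R i)) ≃* SpecialLinearGroup m (∀ i, R i) where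
  toFun g := ⟨piRingEquiv.symm fun i => g i, by
    ext i
    exact ((Pi.evalRingHom R i).map_det _).trans (g i).det_coe⟩
  invFun g i := SpecialLinearGroup.map (Pi.evalRingHom R i) g
  left_inv _ := rfl
  right_inv _ := rfl
  map_mul' g h := Subtype.ext (map_mul piRingEquiv.symm (fun i => (g i).1) fun i => (h i).1)

end SpecialLinearGroup

/-- Unboundedness is expressed through `N`, since a single infinite factor would already make the
cardinalities themselves unbounded. -/
theorem stmt_3_general {m : Type*} [Fintype m] [DecidableEq m] [Nontrivial m] {ι : Type*}
    (R : ι → Type*) [∀ i, CommRing (R i)] [∀ i, IsDomain (R i)] (N : ι → ℕ)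
    (hN : ¬ BddAbove (range N)) (hNR : ∀ i, N i < ENat.card (R i)) :
    ∃ H : ℕ → Subgroup (∀ i, SpecialLinearGroup m (R i)),
      StrictMono H ∧ (∀ t, H t ≠ ⊤) ∧ ∀ g, ∃ t, g ∈ H t := by
  obtain ⟨S, hS⟩ := exists_subring_pi_isStrictExhaustion hN hNR
  let e := specialLinearGroupPi m R
  let H (t : ℕ) := (entrySubgroup m (S t)).comap e.toMonoidHom
  have hH : IsStrictExhaustion (fun t => (H t : Set (∀ i, SpecialLinearGroup m (R i)))) univ :=
    hS.entrySubgroup.preimage e.surjective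
  exact ⟨H, hH.strictMono_and_ne_top_and_exists_mem⟩

/-- Fix `d ≥ 2` and a strictly increasing sequence of prime powers `qₙ` (realized as the
cardinalities of a sequence of finite fields `Fₙ`). Then `c(∏ n, SL(d, Fₙ)) = ω`:
the full direct product is the union of a strictly increasing countable chain of proper
subgroups. -/
theorem stmt_3 (d : ℕ) (hd : 2 ≤ d) (F : ℕ → Type*) [∀ n, Field (F n)] [∀ n, Fintype (F n)]
    (hq : StrictMono fun n => Fintype.card (F n)) :
    ∃ H : ℕ → Subgroup (∀ n, Matrix.SpecialLinearGroup (Fin d) (F n)),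
      StrictMono H ∧ (∀ t, H t ≠ ⊤) ∧
        ∀ g : ∀ n, Matrix.SpecialLinearGroup (Fin d) (F n), ∃ t, g ∈ H t := by
  have := Fin.nontrivial_iff_two_le.mpr hd
  refine stmt_3_general F id (by simp) fun n => ?_
  have hlt : n < Fintype.card (F n) :=
    (Nat.lt_add_of_pos_right Fintype.card_pos).trans_le (hq.add_le_nat n 0)
  simpa using hlt
end

section
/- Let (m_n)_{n∈ℕ} be a sequence of integers with m_n ≥ 5 for all n, and let S_n = Alt(m_n) be the alternating group on m_n letters. Then c(∏_{n∈ℕ} S_n) > ω; that is, the full direct product ∏_n Alt(m_n) cannot be written as the union of a countable increasing chain of proper subgroups. -/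
/-! Factors of degree at most `M` have finitely many isomorphism types, so their product is the
image of a power of one finite perfect group `S`. For a power of `S` (Koppelberg and Tits), the sets
`F` such that a subgroup contains all functions constant on `F` and trivial elsewhere form a Boolean
algebra, because the commutator of functions supported on `F₁` and `F₂` is supported on `F₁ ∩ F₂`.
So a chain of subgroups yields a chain of Boolean algebras, and a diagonal argument shows that one
of them contains every set.

Factors of large degree are handled following Saxl, Shelah and Thomas. Choose disjoint blocks
`A 0, A 1, …` in every factor, the `k`-th one containing a proportion of the points that depends
only on `k`, and an element `x k` supported on the `k`-th blocks. If no subgroup of the chain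
contained all conjugates of some `x k` by elements supported on the `k`-th blocks, then conjugators
witnessing this could be glued along the disjoint blocks to a single element outside every subgroup.
If `x k` is a full cycle on a subset `B k` of the block, quotients of two such conjugates give all
even permutations of `B k`, since an even permutation of a finite set is a quotient of two full
cycles. Finally, sets of a fixed proportion can be enlarged to the whole factor in a number of steps
which is the same for all factors.
-/

open Equiv Function
open scoped Finset Pointwise commutatorElement

namespace BooleanChain

variable {α : Type*} [BooleanAlgebra α] {B : ℕ → BooleanSubalgebra α}

/-- An element of a Boolean algebra is *captured* by a chain of subalgebras if a single member of
the chain contains everything below it. -/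
def Captures (B : ℕ → BooleanSubalgebra α) (a : α) : Prop :=
  ∃ t, ∀ x ≤ a, x ∈ B t

theorem Captures.sup (hB : Monotone B) {a b : α} (ha : Captures B a) (hb : Captures B b) :
    Captures B (a ⊔ b) := by
  obtain ⟨s, hs⟩ := ha
  obtain ⟨t, ht⟩ := hb
  refine ⟨max s t, fun x hx => ?_⟩
  rw [← inf_eq_left.mpr hx, inf_sup_left]
  exact BooleanSubalgebra.sup_mem (hB (le_max_left s t) (hs _ inf_le_right))
    (hB (le_max_right s t) (ht _ inf_le_right))

theorem exists_le_not_captures_sdiff_notMem (hB : Monotone B) (hU : ∀ a, ∃ t, a ∈ B t)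
    {a : α} (ha : ¬ Captures B a) (k : ℕ) :
    ∃ b ≤ a, ¬ Captures B b ∧ a \ b ∉ B k := by
  obtain ⟨t, hat⟩ := hU a
  obtain ⟨x, hxa, hx⟩ : ∃ x ≤ a, x ∉ B (max k t) := by
    by_contra! h
    exact ha ⟨_, h⟩
  have hx' : a \ x ∉ B (max k t) := fun h => hx <| by
    simpa only [sdiff_sdiff_eq_self hxa] using
      BooleanSubalgebra.sdiff_mem (hB (le_max_right k t) hat) h
  have hk : B k ≤ B (max k t) := hB (le_max_left k t)
  by_cases hcx : Captures B x
  · refine ⟨a \ x, sdiff_le, fun h => ha ?_, fun h => hx (hk ?_)⟩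
    · simpa only [sup_sdiff_cancel_right hxa] using hcx.sup hB h
    · simpa only [sdiff_sdiff_eq_self hxa] using h
  · exact ⟨x, hxa, hcx, fun h => hx' (hk h)⟩

theorem exists_pairwise_disjoint_notMem (hB : Monotone B) (hU : ∀ a, ∃ t, a ∈ B t)
    (htop : ¬ Captures B ⊤) : ∃ D : ℕ → α, Pairwise (Disjoint on D) ∧ ∀ k, D k ∉ B k := by
  choose! next next_le not_captures_next sdiff_notMem using
    fun a (ha : ¬ Captures B a) k => exists_le_not_captures_sdiff_notMem hB hU ha k
  let A : ℕ → α := fun k => Nat.rec ⊤ (fun k a => next a k) k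
  have hA : ∀ k, ¬ Captures B (A k) := fun k => by
    induction k with
    | zero => exact htop
    | succ k ih => exact not_captures_next _ ih k
  have hanti : Antitone A := antitone_nat_of_succ_le fun k => next_le _ (hA k) k
  refine ⟨fun k => A k \ A (k + 1), ?_, fun k => sdiff_notMem _ (hA k) k⟩
  refine (pairwise_disjoint_on _).mpr fun j k hjk => ?_
  exact disjoint_sdiff_self_left.mono_right (sdiff_le.trans (hanti hjk))

theorem exists_eq_top {α : Type*} [CompleteBooleanAlgebra α] {B : ℕ → BooleanSubalgebra α}
    (hB : Monotone B) (hU : ∀ a, ∃ t, a ∈ B t) : ∃ t, B t = ⊤ := by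
  by_contra! hne
  have htop : ¬ Captures B ⊤ := fun ⟨t, ht⟩ => hne t (eq_top_iff.mpr fun a _ => ht a le_top)
  obtain ⟨D, hD, hDB⟩ := exists_pairwise_disjoint_notMem hB hU htop
  let F : ℕ → α := fun i => ⨆ j, D (Nat.pair i j)
  choose f hf using fun i => hU (F i)
  let g : ℕ → ℕ := fun i => Nat.pair i (max i (f i))
  obtain ⟨t, ht⟩ := hU (⨆ i, D (g i))
  have hinf : (⨆ i, D (g i)) ⊓ F t = D (g t) := by
    refine le_antisymm ?_ (le_inf (le_iSup (fun i => D (g i)) t)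
      (le_iSup (fun j => D (Nat.pair t j)) _))
    simp only [F, iSup_inf_eq, inf_iSup_eq, iSup_le_iff]
    intro j i
    by_cases hij : g i = Nat.pair t j
    · obtain rfl : i = t := (Nat.pair_eq_pair.mp hij).1
      exact inf_le_left
    · exact (hD hij).le_bot.trans bot_le
  have hpair : max t (f t) ≤ g t := Nat.right_le_pair _ _
  refine hDB (g t) (hB hpair (hinf ▸ BooleanSubalgebra.inf_mem ?_ ?_))
  · exact hB (le_max_left _ _) ht
  · exact hB (le_max_right _ _) (hf t)

end BooleanChain

/-- A countable increasing chain of subgroups whose union is the whole group. -/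
structure Exhaustion (G : Type*) [Group G] where
  /-- The subgroups of the chain, which need not be proper. -/
  chain : ℕ → Subgroup G
  monotone : Monotone chain
  exists_mem : ∀ g, ∃ t, g ∈ chain t

/-- The property `c(G) > ω`: no countable increasing chain of proper subgroups has union `G`.
Finitely generated groups, for which the cofinality is not defined, have it too. -/
def HasUncountableCofinality (G : Type*) [Group G] : Prop :=
  ∀ E : Exhaustion G, ∃ t, E.chain t = ⊤

namespace Exhaustion

variable {G : Type*} [Group G] (E : Exhaustion G)

/-- An exhaustion absorbs a set if a single member of the chain contains it. -/
def Absorbs (S : Set G) : Prop :=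
  ∃ t, S ⊆ E.chain t

variable {E} {S T : Set G}

theorem Absorbs.mono (hT : E.Absorbs T) (hST : S ⊆ T) : E.Absorbs S :=
  hT.imp fun _ ht => hST.trans ht

theorem Absorbs.mul (hS : E.Absorbs S) (hT : E.Absorbs T) : E.Absorbs (S * T) := by
  obtain ⟨s, hs⟩ := hS
  obtain ⟨t, ht⟩ := hT
  refine ⟨max s t, Set.mul_subset_iff.mpr fun x hx y hy => ?_⟩
  exact mul_mem (E.monotone (le_max_left s t) (hs hx)) (E.monotone (le_max_right s t) (ht hy))

theorem Absorbs.inv (hS : E.Absorbs S) : E.Absorbs S⁻¹ :=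
  hS.imp fun t ht _ hx => (E.chain t).inv_mem_iff.mp (ht hx)

theorem absorbs_singleton (g : G) : E.Absorbs {g} :=
  (E.exists_mem g).imp fun _ ht => Set.singleton_subset_iff.mpr ht

theorem Absorbs.exists_eq_top (h : E.Absorbs Set.univ) : ∃ t, E.chain t = ⊤ :=
  h.imp fun _ ht => eq_top_iff.mpr fun _ _ => ht trivial

theorem absorbs_finite (hS : S.Finite) : E.Absorbs S := by
  choose t ht using E.exists_mem
  obtain ⟨n, hn⟩ := (hS.image t).bddAbove
  exact ⟨n, fun g hg => E.monotone (hn (Set.mem_image_of_mem t hg)) (ht g)⟩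

/-- The exhaustion of the source of a homomorphism by preimages. -/
def comap {G' : Type*} [Group G'] (E : Exhaustion G) (φ : G' →* G) : Exhaustion G' where
  chain t := (E.chain t).comap φ
  monotone _ _ h := Subgroup.comap_mono (E.monotone h)
  exists_mem g := E.exists_mem (φ g)

theorem absorbs_range {G' : Type*} [Group G'] (h : HasUncountableCofinality G') (φ : G' →* G) :
    E.Absorbs φ.range := by
  obtain ⟨t, ht⟩ := h (E.comap φ)
  refine ⟨t, ?_⟩
  rintro _ ⟨g, rfl⟩
  have hg : g ∈ (E.comap φ).chain t := ht ▸ Subgroup.mem_top g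
  exact hg

end Exhaustion

section Powers

variable {X S : Type*} [Group S]

open scoped Classical in
theorem mulIndicator_inter_mem [Group.IsPerfect S] {K : Subgroup (X → S)} {F F' : Set X}
    (hF : ∀ s, F.mulIndicator (const X s) ∈ K) (hF' : ∀ s, F'.mulIndicator (const X s) ∈ K)
    (s : S) : (F ∩ F').mulIndicator (const X s) ∈ K := by
  let φ : S →* X → S := (Set.mulIndicatorHom S (F ∩ F')).comp (Pi.constMonoidHom X S)
  have hφ : ∀ s s' : S, φ ⁅s, s'⁆ = ⁅F.mulIndicator (const X s), F'.mulIndicator (const X s')⁆ := by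
    intro s s'
    funext x
    by_cases hx : x ∈ F <;> by_cases hx' : x ∈ F' <;>
      simp [φ, Set.mulIndicatorHom, commutatorElement_def, hx, hx']
  have hcomm : commutator S ≤ K.comap φ := by
    rw [commutator_def, Subgroup.commutator_le]
    intro s _ s' _
    rw [Subgroup.mem_comap, hφ, commutatorElement_def]
    exact mul_mem (mul_mem (mul_mem (hF s) (hF' s')) (inv_mem (hF s))) (inv_mem (hF' s'))
  rw [Group.IsPerfect.commutator_eq_top] at hcomm
  exact hcomm (Subgroup.mem_top s)

/-- The Boolean algebra of sets `F` such that `K` contains every function that is constant on `F`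
and trivial off `F`, where `K` is a subgroup of a power `X → S` containing the constants. -/
def indicatorAlgebra [Group.IsPerfect S] (K : Subgroup (X → S)) (hK : ∀ s, const X s ∈ K) :
    BooleanSubalgebra (Set X) where
  carrier := {F | ∀ s, F.mulIndicator (const X s) ∈ K}
  infClosed' _ hF _ hF' := mulIndicator_inter_mem hF hF'
  compl_mem' {F} hF s := Set.mulIndicator_compl F (const X s) ▸ mul_mem (hK s) (inv_mem (hF s))
  bot_mem' s := (Set.mulIndicator_empty (const X s)).symm ▸ one_mem K
  supClosed' F hF F' hF' s := by
    change (F ∪ F').mulIndicator (const X s) ∈ K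
    rw [eq_mul_inv_of_mul_eq (Set.mulIndicator_union_mul_inter (const X s) F F')]
    exact mul_mem (mul_mem (hF s) (hF' s)) (inv_mem (mulIndicator_inter_mem hF hF' s))

theorem eq_top_of_mulIndicator_mem [Finite S] {K : Subgroup (X → S)}
    (hK : ∀ (F : Set X) (s : S), F.mulIndicator (const X s) ∈ K) : K = ⊤ := by
  classical
  have := Fintype.ofFinite S
  have hfib : ∀ (T : Finset S) (g : X → S), (g ⁻¹' T).mulIndicator g ∈ K := by
    intro T g
    induction T using Finset.induction_on with
    | empty =>
      rw [Finset.coe_empty, Set.preimage_empty, Set.mulIndicator_empty]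
      exact one_mem K
    | insert s T hs ih =>
      have hsplit : (g ⁻¹' ↑(insert s T)).mulIndicator g =
          (g ⁻¹' {s}).mulIndicator (const X s) * (g ⁻¹' T).mulIndicator g := by
        funext x
        by_cases hx : g x = s <;> by_cases hxT : g x ∈ T <;> simp_all
      exact hsplit ▸ mul_mem (hK _ s) ih
  refine eq_top_iff.mpr fun g _ => ?_
  simpa using hfib Finset.univ g

theorem hasUncountableCofinality_pi_const [Finite S] [Group.IsPerfect S] :
    HasUncountableCofinality (X → S) := by
  intro E
  obtain ⟨t₀, ht₀⟩ := E.absorbs_finite (Set.finite_range (const X : S → X → S))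
  have hconst : ∀ t s, const X s ∈ E.chain (t₀ + t) := fun t s =>
    E.monotone (Nat.le_add_right t₀ t) (ht₀ (Set.mem_range_self s))
  have hmono : Monotone fun t => indicatorAlgebra (E.chain (t₀ + t)) (hconst t) :=
    fun s t hst F hF x => E.monotone (Nat.add_le_add_left hst t₀) (hF x)
  obtain ⟨t, ht⟩ := BooleanChain.exists_eq_top hmono fun F => by
    obtain ⟨t, ht⟩ := E.absorbs_finite
      (Set.finite_range fun s => F.mulIndicator (const X s : X → S))
    exact ⟨t, fun s => E.monotone (Nat.le_add_left t t₀) (ht (Set.mem_range_self s))⟩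
  refine ⟨t₀ + t, eq_top_of_mulIndicator_mem fun F => ?_⟩
  have hF : F ∈ indicatorAlgebra (E.chain (t₀ + t)) (hconst t) := by rw [ht]; trivial
  exact hF

end Powers

section Products

variable {ι : Type*} {G : ι → Type*} [∀ i, Group (G i)]

variable (G) in
/-- The elements of a product of groups that are trivial on the index set `I`. -/
def trivialOn (I : Set ι) : Subgroup (∀ i, G i) :=
  Subgroup.pi I fun _ => ⊥

theorem absorbs_trivialOn_compl_of_surjective (E : Exhaustion (∀ i, G i)) {S : Type*} [Group S]
    [Finite S] [Group.IsPerfect S] {I : Set ι} (φ : ∀ i, S →* G i)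
    (hφ : ∀ i ∈ I, Surjective (φ i)) :
    E.Absorbs (trivialOn G Iᶜ) := by
  let Φ : (ι → S) →* ∀ i, G i := MonoidHom.pi fun i => (φ i).comp (Pi.evalMonoidHom _ i)
  refine (Exhaustion.absorbs_range hasUncountableCofinality_pi_const Φ).mono fun g hg => ?_
  have hpre : ∀ i, ∃ s, φ i s = g i := fun i => by
    by_cases hi : i ∈ I
    · exact hφ i hi (g i)
    · exact ⟨1, (map_one _).trans (Subgroup.mem_bot.mp (hg i hi)).symm⟩
  choose s hs using hpre
  exact ⟨s, funext hs⟩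

theorem trivialOn_mul_trivialOn_compl (I : Set ι) :
    (trivialOn G I : Set (∀ i, G i)) * (trivialOn G Iᶜ : Set (∀ i, G i)) = Set.univ := by
  classical
  refine Set.eq_univ_of_forall fun g => ⟨I.piecewise 1 g, ?_, I.piecewise g 1, ?_, ?_⟩
  · exact fun i hi => Set.piecewise_eq_of_mem _ _ _ hi
  · exact fun i hi => Set.piecewise_eq_of_notMem _ _ _ hi
  · dsimp only
    rw [← Set.piecewise_mul, one_mul, mul_one, Set.piecewise_same]

instance isPerfect_pi [Finite ι] [∀ i, Group.IsPerfect (G i)] : Group.IsPerfect (∀ i, G i) where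
  commutator_eq_top := by
    have h := Subgroup.commutator_pi_pi_of_finite fun i => (⊤ : Subgroup (G i))
    simpa only [Subgroup.pi_top, ← commutator_def, Group.IsPerfect.commutator_eq_top] using
      h fun _ => ⊤

end Products

section BoundedDegree

variable {ι : Type*} {α : ι → Type*} [∀ i, Fintype (α i)] [∀ i, DecidableEq (α i)]

theorem absorbs_trivialOn_card_le_compl (hα : ∀ i, 5 ≤ Fintype.card (α i))
    (E : Exhaustion (∀ i, alternatingGroup (α i))) (M : ℕ) :
    E.Absorbs (trivialOn (fun i => alternatingGroup (α i)) {i | Fintype.card (α i) ≤ M}ᶜ) := by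
  have : ∀ v : Set.Icc 5 M, Group.IsPerfect (alternatingGroup (Fin v)) := fun v =>
    ⟨commutator_alternatingGroup_eq_top (by simpa using v.2.1)⟩
  have hsurj : ∀ i, ∃ φ : (∀ v : Set.Icc 5 M, alternatingGroup (Fin v)) →* alternatingGroup (α i),
      Fintype.card (α i) ≤ M → Surjective φ := by
    intro i
    by_cases hi : Fintype.card (α i) ≤ M
    · let e := (Fintype.equivFin (α i)).symm.altCongrHom
      let v : Set.Icc 5 M := ⟨Fintype.card (α i), hα i, hi⟩
      exact ⟨e.toMonoidHom.comp (Pi.evalMonoidHom _ v),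
        fun _ => e.surjective.comp (Function.surjective_eval v)⟩
    · exact ⟨1, fun h => absurd h hi⟩
  choose φ hφ using hsurj
  exact absorbs_trivialOn_compl_of_surjective E φ hφ

end BoundedDegree

section Permutations

variable {α : Type*} {s t E : Finset α}

theorem apply_mem_iff_of_fixes_compl {σ : Perm α} (hσ : ∀ x ∉ s, σ x = x) {x : α} :
    σ x ∈ s ↔ x ∈ s := by
  rw [← not_iff_not]
  refine ⟨fun hx => ?_, fun hx => (hσ x hx).symm ▸ hx⟩
  rwa [σ.injective (hσ _ hx)] at hx

theorem conj_eq_conj_of_eqOn {σ π x : Perm α} (hx : ∀ y ∉ s, x y = y) (h : ∀ y ∈ s, σ y = π y) :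
    σ * x * σ⁻¹ = π * x * π⁻¹ := by
  have hdisj : Perm.Disjoint (π⁻¹ * σ) x := fun y => by
    by_cases hy : y ∈ s
    · exact Or.inl (by rw [Perm.mul_apply, h y hy, Perm.inv_eq_iff_eq])
    · exact Or.inr (hx y hy)
  calc σ * x * σ⁻¹ = π * ((π⁻¹ * σ) * x) * σ⁻¹ := by group
    _ = π * (x * (π⁻¹ * σ)) * σ⁻¹ := by rw [hdisj.commute.eq]
    _ = π * x * π⁻¹ := by group

theorem exists_perm_eqOn_fixing_compl [Finite α] {f : α → α} (hE : E ⊆ s)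
    (hmaps : Set.MapsTo f E s) (hinj : Set.InjOn f E) :
    ∃ σ : Perm α, (∀ x ∉ s, σ x = x) ∧ ∀ x ∈ E, σ x = f x := by
  classical
  have := Fintype.ofFinite α
  let f' : α → α := E.piecewise f id
  have hon : Set.EqOn f' f E := fun x hx => Finset.piecewise_eq_of_mem _ _ _ hx
  have hoff : Set.EqOn f' id (sᶜ : Set α) := fun x hx =>
    Finset.piecewise_eq_of_notMem _ _ _ fun hxE => hx (hE hxE)
  have hf' : Set.InjOn f' (E ∪ sᶜ : Set α) := by
    have hdisj : Disjoint (E : Set α) (sᶜ : Set α) :=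
      Set.disjoint_compl_right_iff_subset.mpr (Finset.coe_subset.mpr hE)
    refine (Set.injOn_union hdisj).mpr
      ⟨hon.injOn_iff.mpr hinj, hoff.injOn_iff.mpr (Set.injOn_id _), fun x hx y hy h => hy ?_⟩
    have hxy : f x = y := by rwa [hon hx, hoff hy] at h
    exact hxy ▸ hmaps hx
  obtain ⟨σ, hσ⟩ := Set.MapsTo.exists_equiv_extend_of_card_eq (t := Finset.univ) rfl
    (fun x _ => Finset.mem_coe.mpr (Finset.mem_univ (f' x))) hf'
  exact ⟨σ.trans (Equiv.subtypeUnivEquiv Finset.mem_univ),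
    fun x hx => (hσ x (Or.inr hx)).trans (hoff hx), fun x hx => (hσ x (Or.inl hx)).trans (hon hx)⟩

/-- The permutations of `α` that permute `s` in a single cycle and fix all other points. -/
def fullCycles (s : Finset α) : Set (Perm α) :=
  {c | c.IsCycleOn s ∧ ∀ x ∉ s, c x = x}

theorem isCycle_of_mem_fullCycles {c : Perm α} (hc : c ∈ fullCycles s) (hs : s.Nontrivial) :
    c.IsCycle :=
  Perm.isCycle_iff_exists_isCycleOn.mpr
    ⟨s, hs, hc.1, fun {x} hx => by_contra fun h => hx (hc.2 x h)⟩

theorem fullCycles_nonempty (s : Finset α) : (fullCycles s).Nonempty := by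
  obtain ⟨c, hc, hsupp⟩ := s.countable_toSet.exists_cycleOn
  exact ⟨c, hc, fun x hx => by_contra fun h => hx (hsupp h)⟩

variable [DecidableEq α]

theorem sameCycle_swap_mul_pow {c : Perm α} {p r : α} (hp : ∀ n : ℕ, (c ^ n) r ≠ p) (n : ℕ) :
    (swap p r * c).SameCycle r ((c ^ n) r) := by
  induction n with
  | zero => exact .rfl
  | succ n ih =>
    by_cases hr : (c ^ (n + 1)) r = r
    · rw [hr]
    · have happly : (swap p r * c) ((c ^ n) r) = (c ^ (n + 1)) r := by
        rw [Perm.mul_apply, ← Perm.mul_apply c, ← pow_succ', swap_apply_of_ne_of_ne (hp _) hr]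
      exact happly ▸ ih.apply_right

theorem swap_mul_mem_fullCycles_insert {c : Perm α} (hc : c ∈ fullCycles s) {p r : α} (hp : p ∉ s)
    (hr : r ∈ s) : swap p r * c ∈ fullCycles (insert p s) := by
  have hfix : ∀ x ∉ insert p s, (swap p r * c) x = x := by
    intro x hx
    rw [Finset.mem_insert, not_or] at hx
    rw [Perm.mul_apply, hc.2 x hx.2]
    exact swap_apply_of_ne_of_ne hx.1 fun h => hx.2 (h ▸ hr)
  have hrp : (swap p r * c).SameCycle r p :=
    .symm ⟨1, by rw [zpow_one, Perm.mul_apply, hc.2 p hp, swap_apply_left]⟩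
  have hreach : ∀ x ∈ insert p s, (swap p r * c).SameCycle r x := by
    intro x hx
    rcases Finset.mem_insert.mp hx with rfl | hx
    · exact hrp
    · have hpow : ∀ n : ℕ, (c ^ n) r ≠ p := fun n h =>
        hp (Finset.mem_coe.mp (h ▸ (hc.1.1.perm_pow n).mapsTo hr))
      obtain ⟨n, -, rfl⟩ := hc.1.exists_pow_eq hr hx
      exact sameCycle_swap_mul_pow hpow n
  exact ⟨⟨Equiv.bijOn _ fun _ => apply_mem_iff_of_fixes_compl hfix,
    fun x hx y hy => (hreach x hx).symm.trans (hreach y hy)⟩, hfix⟩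

theorem swap_mul_swap_mul_mem_fullCycles {c : Perm α} {p q r : α} (hpq : p ≠ q) (hp : p ∉ s)
    (hq : q ∉ s) (hc : c ∈ fullCycles s) (hr : r ∈ s) :
    swap q p * (swap p r * c) ∈ fullCycles (insert q (insert p s)) :=
  swap_mul_mem_fullCycles_insert (swap_mul_mem_fullCycles_insert hc hp hr)
    (Finset.mem_insert.not.mpr (not_or.mpr ⟨hpq.symm, hq⟩)) (Finset.mem_insert_self p s)

theorem swap_mul_swap_mul_mem_inv_mul_fullCycles {p q r r' : α} (hpq : p ≠ q) (hp : p ∉ s)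
    (hq : q ∉ s) (hr : r ∈ s) (hr' : r' ∈ s) {g : Perm α}
    (hg : g ∈ (fullCycles s)⁻¹ * fullCycles s) :
    swap p r * (swap q r' * g) ∈
      (fullCycles (insert q (insert p s)))⁻¹ * fullCycles (insert q (insert p s)) := by
  obtain ⟨c', hc, d, hd, rfl⟩ := hg
  obtain ⟨c, rfl⟩ : ∃ c, c' = c⁻¹ := ⟨c'⁻¹, (inv_inv c').symm⟩
  rw [Set.inv_mem_inv] at hc
  have hconj : ∀ {x y}, x ∉ s → swap x y * c⁻¹ = c⁻¹ * swap x (c y) := by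
    intro x y hx
    rw [mul_swap_eq_swap_mul, Perm.inv_eq_iff_eq.mpr (hc.2 x hx).symm, Perm.inv_eq_iff_eq.mpr rfl]
  have hf : swap q p * (swap p (c r) * c) ∈ fullCycles (insert q (insert p s)) :=
    swap_mul_swap_mul_mem_fullCycles hpq hp hq hc (hc.1.apply_mem_iff.mpr hr)
  have hf' : swap p q * (swap q (c r') * d) ∈ fullCycles (insert q (insert p s)) :=
    Finset.insert_comm q p s ▸
      swap_mul_swap_mul_mem_fullCycles hpq.symm hq hp hd (hc.1.apply_mem_iff.mpr hr')
  refine ⟨_, Set.inv_mem_inv.mpr hf, _, hf', ?_⟩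
  calc (swap q p * (swap p (c r) * c))⁻¹ * (swap p q * (swap q (c r') * d))
      = c⁻¹ * swap p (c r) * (swap q p * swap p q) * swap q (c r') * d := by
        simp only [mul_inv_rev, swap_inv, mul_assoc]
    _ = swap p r * (swap q r' * (c⁻¹ * d)) := by
        rw [swap_comm q p, swap_mul_self, mul_one, ← hconj hp, mul_assoc (swap p r), ← hconj hq]
        simp only [mul_assoc]

variable [Fintype α]

theorem support_of_mem_fullCycles {c : Perm α} (hc : c ∈ fullCycles s) (hs : s.Nontrivial) :
    c.support = s := by
  ext x
  rw [Perm.mem_support]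
  exact ⟨fun hx => by_contra fun h => hx (hc.2 x h), fun hx => hc.1.apply_ne hs hx⟩

theorem exists_eq_swap_mul {g : Perm α} (hne : g ≠ 1) (hg : ∀ x ∉ s, g x = x) (a : α) :
    ∃ p ∈ s, p ≠ a ∧ ∃ r ∈ s.erase p, ∃ g' : Perm α,
      Perm.sign g' = -Perm.sign g ∧ (∀ x ∉ s.erase p, g' x = x) ∧ g = swap p r * g' := by
  obtain ⟨p, hp, hpa⟩ : ∃ p, g p ≠ p ∧ p ≠ a := by
    obtain ⟨x, hx⟩ := DFunLike.ne_iff.mp hne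
    rw [Perm.one_apply] at hx
    by_cases hxa : x = a
    · exact ⟨g x, g.injective.ne hx, hxa ▸ hx⟩
    · exact ⟨x, hx, hxa⟩
  have hps : p ∈ s := by_contra fun h => hp (hg p h)
  have hgps : g p ∈ s := (apply_mem_iff_of_fixes_compl hg).mpr hps
  refine ⟨p, hps, hpa, g p, Finset.mem_erase.mpr ⟨hp, hgps⟩, swap p (g p) * g, ?_, ?_, ?_⟩
  · rw [Perm.sign_mul, Perm.sign_swap hp.symm, neg_one_mul]
  · intro x hx
    rw [Perm.mul_apply]
    by_cases hxp : x = p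
    · rw [hxp, swap_apply_right]
    · have hxs : x ∉ s := fun h => hx (Finset.mem_erase.mpr ⟨hxp, h⟩)
      rw [hg x hxs, swap_apply_of_ne_of_ne hxp fun h => hxs (h ▸ hgps)]
  · rw [swap_mul_self_mul]

theorem mem_inv_mul_fullCycles {g : Perm α} (hsign : Perm.sign g = 1) (hg : ∀ x ∉ s, g x = x) :
    g ∈ (fullCycles s)⁻¹ * fullCycles s := by
  -- Two points are removed from `s` at a time, which keeps `g` even.
  induction s using Finset.strongInduction generalizing g with
  | H s ih =>
  by_cases hne : g = 1
  · obtain ⟨c, hc⟩ := fullCycles_nonempty s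
    exact ⟨c⁻¹, Set.inv_mem_inv.mpr hc, c, hc, (inv_mul_cancel c).trans hne.symm⟩
  obtain ⟨x, -⟩ := DFunLike.ne_iff.mp hne
  obtain ⟨p, hp, -, r, hr, g₁, hsign₁, hg₁, rfl⟩ := exists_eq_swap_mul hne hg x
  have hne₁ : g₁ ≠ 1 := by
    rintro rfl
    rw [hsign, Perm.sign_one] at hsign₁
    exact absurd hsign₁ (by decide)
  obtain ⟨q, hq, hqr, r', hr', g', hsign', hg', rfl⟩ := exists_eq_swap_mul hne₁ hg₁ r
  rw [hsign₁, hsign, neg_neg] at hsign'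
  have hpq : p ≠ q := (Finset.ne_of_mem_erase hq).symm
  have hpt : p ∉ (s.erase p).erase q := fun h =>
    Finset.notMem_erase p s (Finset.mem_of_mem_erase h)
  have hcycles := swap_mul_swap_mul_mem_inv_mul_fullCycles hpq hpt (Finset.notMem_erase q _)
    (Finset.mem_erase.mpr ⟨hqr.symm, hr⟩) hr' (ih _
      ((Finset.erase_subset _ _).trans_ssubset (Finset.erase_ssubset hp)) hsign' hg')
  rwa [Finset.insert_comm, Finset.insert_erase hq, Finset.insert_erase hp] at hcycles

/-- The even permutations of `α` that move only points of `s`: the copy of `Alt(s)` in `Alt(α)`. -/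
def altOn (s : Finset α) : Subgroup (alternatingGroup α) :=
  fixingSubgroup (alternatingGroup α) (sᶜ : Set α)

theorem mem_altOn {g : alternatingGroup α} :
    g ∈ altOn s ↔ ∀ x ∉ s, (g : Perm α) x = x := by
  simp [altOn, mem_fixingSubgroup_iff, Subgroup.smul_def]

theorem apply_mem_iff_of_mem_altOn {g : alternatingGroup α} (hg : g ∈ altOn s) {x : α} :
    (g : Perm α) x ∈ s ↔ x ∈ s :=
  apply_mem_iff_of_fixes_compl (mem_altOn.mp hg)

theorem exists_mem_altOn_eqOn {f : α → α} (hE : E ⊆ s) (hmaps : Set.MapsTo f E s)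
    (hinj : Set.InjOn f E) (hcard : #E + 2 ≤ #s) :
    ∃ σ ∈ altOn s, ∀ x ∈ E, (σ : Perm α) x = f x := by
  obtain ⟨σ, hσs, hσE⟩ := exists_perm_eqOn_fixing_compl hE hmaps hinj
  rcases Int.units_eq_one_or (Perm.sign σ) with hsign | hsign
  · exact ⟨⟨σ, hsign⟩, mem_altOn.mpr hσs, hσE⟩
  have himage : E.image f ⊆ s := Finset.image_subset_iff.mpr hmaps
  obtain ⟨u, hu, v, hv, huv⟩ : ∃ u ∈ s \ E.image f, ∃ v ∈ s \ E.image f, u ≠ v := by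
    rw [← Finset.one_lt_card, Finset.card_sdiff_of_subset himage, Finset.card_image_of_injOn hinj]
    lia
  simp only [Finset.mem_sdiff, Finset.mem_image, not_exists, not_and] at hu hv
  refine ⟨⟨swap u v * σ, ?_⟩, mem_altOn.mpr fun x hx => ?_, fun x hx => ?_⟩
  · rw [Perm.mem_alternatingGroup, Perm.sign_mul, Perm.sign_swap huv, hsign]
    rfl
  · rw [Perm.mul_apply, hσs x hx]
    exact swap_apply_of_ne_of_ne (fun h => hx (h ▸ hu.1)) (fun h => hx (h ▸ hv.1))
  · rw [Perm.mul_apply, hσE x hx]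
    exact swap_apply_of_ne_of_ne (hu.2 x hx) (hv.2 x hx)

theorem sign_of_mem_fullCycles {c : Perm α} (hc : c ∈ fullCycles s) (hs : s.Nontrivial)
    (hodd : Odd #s) : Perm.sign c = 1 := by
  rw [(isCycle_of_mem_fullCycles hc hs).sign, support_of_mem_fullCycles hc hs, hodd.neg_one_pow,
    neg_neg]

theorem exists_mem_altOn_conj_eq {c d : Perm α} (hc : c ∈ fullCycles s) (hd : d ∈ fullCycles s)
    (hs : s.Nontrivial) (hst : s ⊆ t) (hcard : #s + 2 ≤ #t) :
    ∃ σ ∈ altOn t, (σ : Perm α) * c * (σ : Perm α)⁻¹ = d := by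
  obtain ⟨π, hπ⟩ := isConj_iff.mp <|
    (isCycle_of_mem_fullCycles hc hs).isConj (isCycle_of_mem_fullCycles hd hs)
      (by rw [support_of_mem_fullCycles hc hs, support_of_mem_fullCycles hd hs])
  have hπs : Set.MapsTo π s t := by
    intro x hx
    have hmem : π x ∈ d.support := by
      rw [← hπ, Perm.support_conj, support_of_mem_fullCycles hc hs]
      exact Finset.mem_map_of_mem _ hx
    exact hst (support_of_mem_fullCycles hd hs ▸ hmem)
  obtain ⟨σ, hσ, hσπ⟩ := exists_mem_altOn_eqOn hst hπs π.injective.injOn hcard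
  exact ⟨σ, hσ, (conj_eq_conj_of_eqOn hc.2 hσπ).trans hπ⟩

theorem exists_conj_inv_mul_conj_eq (hs : s.Nontrivial) (hodd : Odd #s) (hst : s ⊆ t)
    (hcard : #s + 2 ≤ #t) :
    ∃ x ∈ altOn t, ∀ g ∈ altOn s, ∃ ρ ∈ altOn t, ∃ σ ∈ altOn t,
      (ρ * x * ρ⁻¹)⁻¹ * (σ * x * σ⁻¹) = g := by
  obtain ⟨c, hc⟩ := fullCycles_nonempty s
  let x : alternatingGroup α := ⟨c, sign_of_mem_fullCycles hc hs hodd⟩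
  refine ⟨x, mem_altOn.mpr fun y hy => hc.2 y fun h => hy (hst h), fun g hg => ?_⟩
  obtain ⟨d, hd, d', hd', hdd'⟩ := mem_inv_mul_fullCycles g.2 (mem_altOn.mp hg)
  obtain ⟨ρ, hρ, hρd⟩ := exists_mem_altOn_conj_eq hc hd hs hst hcard
  obtain ⟨σ, hσ, hσd⟩ := exists_mem_altOn_conj_eq hc hd' hs hst hcard
  refine ⟨ρ, hρ, σ, hσ, Subtype.ext ?_⟩
  rw [← hdd', ← hσd, ← inv_inv d, ← hρd]
  rfl

theorem exists_mem_altOn_mapsTo {T : Finset α} (hE : E ⊆ s) (hT : T ⊆ s) (hET : #E ≤ #T)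
    (hcard : #E + 2 ≤ #s) : ∃ σ ∈ altOn s, ∀ x ∈ E, (σ : Perm α) x ∈ T := by
  have hs : s.Nonempty := Finset.card_pos.mp (by lia)
  have : Nonempty α := ⟨hs.choose⟩
  obtain ⟨f, hmaps, hinj⟩ := E.finite_toSet.exists_injOn_of_encard_le (t := (T : Set α))
    (by simpa only [Set.encard_coe_eq_coe_finsetCard, Nat.cast_le] using hET)
  obtain ⟨σ, hσ, hσf⟩ := exists_mem_altOn_eqOn hE (fun x hx => hT (hmaps hx)) hinj hcard
  exact ⟨σ, hσ, fun x hx => hσf x hx ▸ hmaps hx⟩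

theorem exists_mul_mul_eq_of_mem_altOn_union (h2 : 2 ≤ #(s ∩ t)) (hle : #(t \ s) ≤ #(s ∩ t))
    (hcard : #(t \ s) + 2 ≤ #s) {g : alternatingGroup α} (hg : g ∈ altOn (s ∪ t)) :
    ∃ b ∈ altOn s, ∃ a ∈ altOn t, ∃ b' ∈ altOn s, b * a * b' = g := by
  -- Choose `b` so that `b * g` maps `t \ s` into `t`; some `a ∈ altOn t` then agrees with it there.
  let X : Finset α := (t \ s).image (g : Perm α) ∩ s
  have hXcard : #X ≤ #(t \ s) :=
    (Finset.card_le_card Finset.inter_subset_left).trans Finset.card_image_le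
  obtain ⟨b, hb, hbX⟩ := exists_mem_altOn_mapsTo (E := X) Finset.inter_subset_right
    Finset.inter_subset_left (hXcard.trans hle) (by lia)
  have hmaps : ∀ x ∈ t \ s, (b : Perm α) ((g : Perm α) x) ∈ t := by
    intro x hx
    by_cases hgx : (g : Perm α) x ∈ s
    · exact Finset.mem_of_mem_inter_right
        (hbX _ (Finset.mem_inter.mpr ⟨Finset.mem_image_of_mem _ hx, hgx⟩))
    · have hgxu : (g : Perm α) x ∈ s ∪ t := (apply_mem_iff_of_mem_altOn hg).mpr
        (Finset.mem_union_right s (Finset.mem_sdiff.mp hx).1)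
      rw [mem_altOn.mp hb _ hgx]
      exact (Finset.mem_union.mp hgxu).resolve_left hgx
  obtain ⟨a, ha, hagb⟩ := exists_mem_altOn_eqOn (f := fun x => (b : Perm α) ((g : Perm α) x))
    Finset.sdiff_subset hmaps ((b : Perm α).injective.comp (g : Perm α).injective).injOn
    (by have := Finset.card_sdiff_add_card_inter t s; rw [Finset.inter_comm] at this; lia)
  refine ⟨b⁻¹, inv_mem hb, a, ha, a⁻¹ * b * g, mem_altOn.mpr fun x hx => ?_, by group⟩
  change (a : Perm α)⁻¹ ((b : Perm α) ((g : Perm α) x)) = x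
  rw [Perm.inv_eq_iff_eq]
  by_cases hxt : x ∈ t
  · exact (hagb x (Finset.mem_sdiff.mpr ⟨hxt, hx⟩)).symm
  · rw [mem_altOn.mp hg x (by simp [hx, hxt]), mem_altOn.mp hb x hx, mem_altOn.mp ha x hxt]

theorem altOn_empty : altOn (∅ : Finset α) = ⊥ :=
  (Subgroup.eq_bot_iff_forall _).mpr fun _ hg =>
    Subtype.ext (Perm.ext fun x => mem_altOn.mp hg x (Finset.notMem_empty x))

theorem conj_mem_altOn {σ g : alternatingGroup α} (hσ : ∀ x ∈ s, (σ : Perm α) x ∈ t)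
    (hg : g ∈ altOn s) : σ * g * σ⁻¹ ∈ altOn t := by
  refine mem_altOn.mpr fun x hx => ?_
  have hxs : (σ : Perm α)⁻¹ x ∉ s := fun h => hx (by simpa using hσ _ h)
  change (σ : Perm α) ((g : Perm α) ((σ : Perm α)⁻¹ x)) = x
  rw [mem_altOn.mp hg _ hxs]
  exact (σ : Perm α).apply_symm_apply x

theorem exists_eqOn_of_pairwise_disjoint_of_lt {A : ℕ → Finset α} (hA : Pairwise (Disjoint on A))
    {p : ℕ → alternatingGroup α} (hp : ∀ k, p k ∈ altOn (A k)) (n : ℕ) :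
    ∃ P : alternatingGroup α, (∀ x, (∀ k < n, x ∉ A k) → (P : Perm α) x = x) ∧
      ∀ k < n, ∀ x ∈ A k, (P : Perm α) x = (p k : Perm α) x := by
  induction n with
  | zero => exact ⟨1, fun _ _ => rfl, fun k hk => absurd hk k.not_lt_zero⟩
  | succ n ih =>
    obtain ⟨P, hfix, hP⟩ := ih
    have hnotMem : ∀ {j k : ℕ} {x : α}, j ≠ k → x ∈ A j → x ∉ A k := fun hjk hx =>
      Finset.disjoint_left.mp (hA hjk) hx
    refine ⟨P * p n, fun x hx => ?_, fun k hk x hxk => ?_⟩ <;>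
      rw [Subgroup.coe_mul, Perm.mul_apply]
    · rw [mem_altOn.mp (hp n) x (hx n n.lt_succ_self)]
      exact hfix x fun k hk => hx k (hk.trans n.lt_succ_self)
    · rcases Nat.lt_succ_iff_lt_or_eq.mp hk with hkn | rfl
      · rw [mem_altOn.mp (hp n) x (hnotMem hkn.ne hxk), hP k hkn x hxk]
      · have hpk : (p k : Perm α) x ∈ A k := (apply_mem_iff_of_mem_altOn (hp k)).mpr hxk
        exact hfix _ fun j hj => hnotMem hj.ne' hpk

theorem exists_eqOn_of_pairwise_disjoint {A : ℕ → Finset α} (hA : Pairwise (Disjoint on A))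
    {p : ℕ → alternatingGroup α} (hp : ∀ k, p k ∈ altOn (A k)) :
    ∃ P : alternatingGroup α, ∀ k, ∀ x ∈ A k, (P : Perm α) x = (p k : Perm α) x := by
  have hbound : ∀ x, ∃ n, ∀ k, x ∈ A k → k < n := fun x => by
    by_cases hx : ∃ k, x ∈ A k
    · obtain ⟨k, hk⟩ := hx
      refine ⟨k + 1, fun j hj => ?_⟩
      rw [hA.eq (Finset.not_disjoint_iff.mpr ⟨x, hj, hk⟩)]
      exact k.lt_succ_self
    · exact ⟨0, fun k hk => absurd ⟨k, hk⟩ hx⟩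
  choose n hn using hbound
  obtain ⟨P, -, hP⟩ := exists_eqOn_of_pairwise_disjoint_of_lt hA hp (Finset.univ.sup n)
  exact ⟨P, fun k x hx => hP k ((hn x k hx).trans_le (Finset.le_sup (Finset.mem_univ x))) x hx⟩

end Permutations

section UnboundedDegree

variable {ι : Type*} {α : ι → Type*} [∀ i, Fintype (α i)] [∀ i, DecidableEq (α i)]

/-- The subgroup `∏ i, Alt(A i)` of `∏ i, Alt(α i)`. -/
def altPi (A : ∀ i, Finset (α i)) : Subgroup (∀ i, alternatingGroup (α i)) :=
  Subgroup.pi Set.univ fun i => altOn (A i)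

variable {A X Y : ∀ i, Finset (α i)} {E : Exhaustion (∀ i, alternatingGroup (α i))}

theorem mem_altPi {g : ∀ i, alternatingGroup (α i)} : g ∈ altPi A ↔ ∀ i, g i ∈ altOn (A i) := by
  simp [altPi, Subgroup.mem_pi]

theorem absorbs_altPi_of_mapsTo (hX : E.Absorbs (altPi X)) (σ : ∀ i, alternatingGroup (α i))
    (hσ : ∀ i, ∀ y ∈ Y i, (σ i : Perm (α i)) y ∈ X i) : E.Absorbs (altPi Y) := by
  refine (((Exhaustion.absorbs_singleton σ⁻¹).mul hX).mul (Exhaustion.absorbs_singleton σ)).mono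
    fun g hg => ?_
  have hconj : σ * g * σ⁻¹ ∈ altPi X :=
    mem_altPi.mpr fun i => conj_mem_altOn (hσ i) (mem_altPi.mp hg i)
  exact ⟨_, Set.mul_mem_mul rfl hconj, σ, rfl, by group⟩

theorem exists_absorbs_conj {A : ℕ → ∀ i, Finset (α i)}
    (hA : ∀ i, Pairwise (Disjoint on fun k => A k i)) {x : ℕ → ∀ i, alternatingGroup (α i)}
    (hx : ∀ k, x k ∈ altPi (A k)) :
    ∃ k, E.Absorbs {y | ∃ σ ∈ altPi (A k), σ * x k * σ⁻¹ = y} := by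
  by_contra! hnot
  choose t ht using fun k => E.exists_mem (x k)
  have hescape : ∀ k, ∃ p ∈ altPi (A k), p * x k * p⁻¹ ∉ E.chain (max k (t k)) := by
    intro k
    by_contra! h
    exact hnot k ⟨_, by rintro _ ⟨σ, hσ, rfl⟩; exact h σ hσ⟩
  choose p hpA hp using hescape
  choose P hP using fun i =>
    exists_eqOn_of_pairwise_disjoint (hA i) fun k => mem_altPi.mp (hpA k) i
  obtain ⟨k, hk⟩ := E.exists_mem P
  have hconj : p k * x k * (p k)⁻¹ = P * x k * P⁻¹ := funext fun i => Subtype.ext <|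
    conj_eq_conj_of_eqOn (mem_altOn.mp (mem_altPi.mp (hx k) i)) fun y hy => (hP i k y hy).symm
  have hPk : P ∈ E.chain (max k (t k)) := E.monotone (le_max_left _ _) hk
  have hxk : x k ∈ E.chain (max k (t k)) := E.monotone (le_max_right _ _) (ht k)
  exact hp k (hconj ▸ mul_mem (mul_mem hPk hxk) (inv_mem hPk))

theorem exists_absorbs_altPi {A B : ℕ → ∀ i, Finset (α i)}
    (hA : ∀ i, Pairwise (Disjoint on fun k => A k i)) (hBA : ∀ k i, B k i ⊆ A k i)
    (hB : ∀ k i, B k i = ∅ ∨ (B k i).Nontrivial ∧ Odd #(B k i) ∧ #(B k i) + 2 ≤ #(A k i)) :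
    ∃ k, E.Absorbs (altPi (B k)) := by
  have hcover : ∀ k i, ∃ x ∈ altOn (A k i), ∀ g ∈ altOn (B k i), ∃ ρ ∈ altOn (A k i),
      ∃ σ ∈ altOn (A k i), (ρ * x * ρ⁻¹)⁻¹ * (σ * x * σ⁻¹) = g := by
    intro k i
    rcases hB k i with hempty | ⟨hnontrivial, hodd, hcard⟩
    · refine ⟨1, one_mem _, fun g hg => ⟨1, one_mem _, 1, one_mem _, ?_⟩⟩
      rw [hempty, altOn_empty, Subgroup.mem_bot] at hg
      simp [hg]
    · exact exists_conj_inv_mul_conj_eq hnontrivial hodd (hBA k i) hcard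
  choose x hxA ρ hρA σ hσA hg using hcover
  obtain ⟨k, hk⟩ := exists_absorbs_conj (E := E) hA fun k => mem_altPi.mpr (hxA k)
  refine ⟨k, (hk.inv.mul hk).mono fun g hgB => ?_⟩
  have hgB' := mem_altPi.mp hgB
  exact ⟨_, Set.inv_mem_inv.mpr ⟨_, mem_altPi.mpr fun i => hρA k i (g i) (hgB' i), rfl⟩,
    _, ⟨_, mem_altPi.mpr fun i => hσA k i (g i) (hgB' i), rfl⟩, funext fun i => hg k i _ (hgB' i)⟩

theorem absorbs_altPi_union (hX : E.Absorbs (altPi X)) (hY : E.Absorbs (altPi Y))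
    (hXY : ∀ i, Y i ⊆ X i ∨ 2 ≤ #(X i ∩ Y i) ∧ #(Y i \ X i) ≤ #(X i ∩ Y i) ∧
      #(Y i \ X i) + 2 ≤ #(X i)) :
    E.Absorbs (altPi fun i => X i ∪ Y i) := by
  refine ((hX.mul hY).mul hX).mono fun g hg => ?_
  have hfactor : ∀ i, ∃ b ∈ altOn (X i), ∃ a ∈ altOn (Y i), ∃ b' ∈ altOn (X i),
      b * a * b' = g i := by
    intro i
    have hgi : g i ∈ altOn (X i ∪ Y i) := mem_altPi.mp hg i
    rcases hXY i with hsub | ⟨h2, hle, hcard⟩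
    · rw [Finset.union_eq_left.mpr hsub] at hgi
      exact ⟨g i, hgi, 1, one_mem _, 1, one_mem _, by simp only [mul_one]⟩
    · exact exists_mul_mul_eq_of_mem_altOn_union h2 hle hcard hgi
  choose b hb a ha b' hb' hprod using hfactor
  exact ⟨b * a, Set.mul_mem_mul (mem_altPi.mpr hb) (mem_altPi.mpr ha), b', mem_altPi.mpr hb',
    funext hprod⟩

/-- `E` absorbs every subproduct `∏ i, Alt(X i)` whose factors have degree at most `d i`. -/
def AbsorbsCard (E : Exhaustion (∀ i, alternatingGroup (α i))) (d : ι → ℕ) : Prop :=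
  ∀ X : ∀ i, Finset (α i), (∀ i, #(X i) ≤ d i) → E.Absorbs (altPi X)

theorem absorbsCard_of_absorbs_altPi {d : ι → ℕ} (hX : E.Absorbs (altPi X))
    (hd : ∀ i, d i = 0 ∨ d i + 2 ≤ #(X i)) : AbsorbsCard E d := by
  intro Y hY
  have hmove : ∀ i, ∃ σ : alternatingGroup (α i), ∀ y ∈ Y i, (σ : Perm (α i)) y ∈ X i := by
    intro i
    rcases hd i with hi | hi
    · exact ⟨1, by simp [Finset.card_eq_zero.mp (Nat.le_zero.mp (hi ▸ hY i))]⟩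
    · have hYX : #(Y i) + 2 ≤ #(X i) := (Nat.add_le_add_right (hY i) 2).trans hi
      obtain ⟨σ, -, hσ⟩ := exists_mem_altOn_mapsTo (Y i).subset_univ (X i).subset_univ (by lia)
        (hYX.trans (Finset.card_le_univ _))
      exact ⟨σ, hσ⟩
  choose σ hσ using hmove
  exact absorbs_altPi_of_mapsTo hX σ hσ

theorem exists_union_eq_of_card_le_add {β : Type*} [DecidableEq β] {Y : Finset β} {a e : ℕ}
    (he : e ≠ 1) (ha : 2 ≤ a) (hY : #Y ≤ (a + 1) * e) :
    ∃ Y₁ Y₂ : Finset β, Y₁ ∪ Y₂ = Y ∧ #Y₁ ≤ a * e ∧ #Y₂ ≤ 2 * e ∧ (Y₂ ⊆ Y₁ ∨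
      2 ≤ #(Y₁ ∩ Y₂) ∧ #(Y₂ \ Y₁) ≤ #(Y₁ ∩ Y₂) ∧ #(Y₂ \ Y₁) + 2 ≤ #Y₁) := by
  rcases le_or_gt #Y (a * e) with hle | hgt
  · exact ⟨Y, ∅, Finset.union_empty Y, hle, Nat.zero_le _, Or.inl (Finset.empty_subset Y)⟩
  have hae : 2 * e ≤ a * e := Nat.mul_le_mul_right e ha
  rw [add_one_mul] at hY
  obtain ⟨Y₁, hY₁, hcard₁⟩ := Finset.exists_subset_card_eq hgt.le
  obtain ⟨W, hW, hcardW⟩ := Finset.exists_subset_card_eq (show e ≤ #Y₁ by lia)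
  have hcardZ : #(Y \ Y₁) = #Y - a * e := by rw [Finset.card_sdiff_of_subset hY₁, hcard₁]
  have hinter : Y₁ ∩ (W ∪ Y \ Y₁) = W := by
    rw [Finset.inter_union_distrib_left, Finset.inter_eq_right.mpr hW, Finset.inter_sdiff_self,
      Finset.union_empty]
  have hdiff : (W ∪ Y \ Y₁) \ Y₁ = Y \ Y₁ := by
    rw [Finset.union_sdiff_distrib, Finset.sdiff_eq_empty_iff_subset.mpr hW, Finset.empty_union,
      sdiff_idem]
  have hunion : #(W ∪ Y \ Y₁) ≤ #W + #(Y \ Y₁) := Finset.card_union_le _ _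
  refine ⟨Y₁, W ∪ Y \ Y₁, ?_, hcard₁.le, by lia, Or.inr ?_⟩
  · rw [← Finset.union_assoc, Finset.union_eq_left.mpr hW, Finset.union_sdiff_of_subset hY₁]
  · rw [hinter, hdiff]
    lia

theorem AbsorbsCard.mul_of_two_mul {e : ι → ℕ} (he : ∀ i, e i ≠ 1)
    (h : AbsorbsCard E fun i => 2 * e i) {a : ℕ} (ha : 2 ≤ a) : AbsorbsCard E fun i => a * e i := by
  induction a, ha using Nat.le_induction with
  | base => exact h
  | succ a ha ih =>
    intro Y hY
    choose Y₁ Y₂ hunion hcard₁ hcard₂ hY₁₂ using fun i =>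
      exists_union_eq_of_card_le_add (he i) ha (hY i)
    obtain rfl : (fun i => Y₁ i ∪ Y₂ i) = Y := funext hunion
    exact absorbs_altPi_union (ih Y₁ hcard₁) (h Y₂ hcard₂) hY₁₂

theorem exists_pairwise_disjoint_card_div_le (β : Type*) [Fintype β] :
    ∃ A : ℕ → Finset β, Pairwise (Disjoint on A) ∧
      ∀ k, Fintype.card β / 2 ^ (k + 1) ≤ #(A k) := by
  let n := Fintype.card β
  let index : β ↪ ℕ := (Fintype.equivFin β).toEmbedding.trans Fin.valEmbedding
  have hmono : ∀ {j k}, j ≤ k → n / 2 ^ k ≤ n / 2 ^ j := fun hjk =>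
    Nat.div_le_div_left (Nat.pow_le_pow_right two_pos hjk) (by positivity)
  have hrange : ∀ k, ((Finset.Ico (n / 2 ^ (k + 1)) (n / 2 ^ k) : Finset ℕ) : Set ℕ) ⊆
      Set.range index := by
    intro k j hj
    have hjn : j < n := (Finset.mem_Ico.mp hj).2.trans_le (Nat.div_le_self _ _)
    exact ⟨(Fintype.equivFin β).symm ⟨j, hjn⟩, by simp [index]⟩
  refine ⟨fun k => (Finset.Ico (n / 2 ^ (k + 1)) (n / 2 ^ k)).preimage index index.injective.injOn,
    (pairwise_disjoint_on _).mpr fun j k hjk => Finset.disjoint_left.mpr fun x hx hx' => ?_,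
    fun k => ?_⟩
  · rw [Finset.mem_preimage, Finset.mem_Ico] at hx hx'
    exact absurd (hx'.2.trans_le (hmono hjk)) hx.1.not_gt
  · rw [Finset.card_preimage, Finset.filter_true_of_mem fun _ hx => hrange k hx, Nat.card_Ico,
      pow_succ, ← Nat.div_div_eq_div_mul]
    lia

theorem exists_absorbsCard_four_mul_div (E : Exhaustion (∀ i, alternatingGroup (α i))) :
    ∃ k, AbsorbsCard E fun i => 4 * (Fintype.card (α i) / 2 ^ k) := by
  -- The sets `B k i` of size `4 * r k i + 3` are odd, which makes their full cycles even.
  let r : ℕ → ι → ℕ := fun k i => Fintype.card (α i) / 2 ^ (k + 5)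
  choose A hA hcardA using fun i => exists_pairwise_disjoint_card_div_le (α i)
  have hr : ∀ k i, 16 * r k i ≤ #(A i k) := by
    intro k i
    have hpow : 2 ^ (k + 5) = 2 ^ (k + 1) * 16 := by ring
    dsimp only [r]
    rw [hpow, ← Nat.div_div_eq_div_mul]
    exact (Nat.mul_div_le _ 16).trans (hcardA i k)
  have hB : ∀ k i, ∃ B ⊆ A i k, r k i = 0 ∧ B = ∅ ∨ 0 < r k i ∧ #B = 4 * r k i + 3 := by
    intro k i
    rcases (r k i).eq_zero_or_pos with h0 | hpos
    · exact ⟨∅, Finset.empty_subset _, Or.inl ⟨h0, rfl⟩⟩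
    · obtain ⟨B, hBA, hB⟩ := Finset.exists_subset_card_eq
        (show 4 * r k i + 3 ≤ #(A i k) by have := hr k i; lia)
      exact ⟨B, hBA, Or.inr ⟨hpos, hB⟩⟩
  choose B hBA hB using hB
  have hblock : ∀ k i,
      B k i = ∅ ∨ (B k i).Nontrivial ∧ Odd #(B k i) ∧ #(B k i) + 2 ≤ #(A i k) := by
    intro k i
    have hrA := hr k i
    rcases hB k i with ⟨-, hempty⟩ | ⟨hpos, hcard⟩
    · exact Or.inl hempty
    · have hodd : Odd #(B k i) := hcard ▸ ⟨2 * r k i + 1, by ring⟩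
      rw [← Finset.one_lt_card_iff_nontrivial]
      exact Or.inr ⟨by rw [hcard]; lia, hodd, by rw [hcard]; lia⟩
  obtain ⟨k, hk⟩ := exists_absorbs_altPi (E := E) (A := fun k i => A i k) hA hBA hblock
  refine ⟨k + 5, absorbsCard_of_absorbs_altPi hk fun i => ?_⟩
  change 4 * r k i = 0 ∨ 4 * r k i + 2 ≤ #(B k i)
  rcases hB k i with ⟨hzero, -⟩ | ⟨-, hcard⟩ <;> lia

theorem exists_absorbs_trivialOn_card_le (E : Exhaustion (∀ i, alternatingGroup (α i))) :
    ∃ M, E.Absorbs (trivialOn (fun i => alternatingGroup (α i)) {i | Fintype.card (α i) ≤ M}) := by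
  obtain ⟨k, hk⟩ := exists_absorbsCard_four_mul_div E
  let e : ι → ℕ := fun i => 2 * (Fintype.card (α i) / 2 ^ k)
  have hdouble : AbsorbsCard E fun i => 2 * e i := by
    simpa only [e, ← mul_assoc, Nat.reduceMul] using hk
  have hlarge : AbsorbsCard E fun i => (2 ^ k + 1) * e i :=
    hdouble.mul_of_two_mul (fun i => by dsimp only [e]; lia)
      (Nat.succ_le_succ Nat.one_le_two_pow)
  let X : ∀ i, Finset (α i) := fun i => if Fintype.card (α i) ≤ 2 ^ k then ∅ else Finset.univ
  refine ⟨2 ^ k, (hlarge X fun i => ?_).mono fun g hg => mem_altPi.mpr fun i => ?_⟩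
  · by_cases hi : Fintype.card (α i) ≤ 2 ^ k
    · simp [X, hi]
    · have hpos : 0 < Fintype.card (α i) / 2 ^ k := Nat.div_pos (not_le.mp hi).le (by positivity)
      calc #(X i) = Fintype.card (α i) := by simp [X, hi]
        _ ≤ 2 ^ k * (Fintype.card (α i) / 2 ^ k + 1) := (Nat.lt_mul_div_succ _ (by positivity)).le
        _ ≤ (2 ^ k + 1) * e i := Nat.mul_le_mul (Nat.le_succ _) (by dsimp only [e]; lia)
  · by_cases hi : Fintype.card (α i) ≤ 2 ^ k
    · rw [show X i = ∅ from if_pos hi, altOn_empty]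
      exact hg i hi
    · rw [show X i = Finset.univ from if_neg hi]
      exact mem_altOn.mpr fun x hx => absurd (Finset.mem_univ x) hx

end UnboundedDegree

theorem stmt_4_general {ι : Type*} (α : ι → Type*) [∀ i, Fintype (α i)] [∀ i, DecidableEq (α i)]
    (hα : ∀ i, 5 ≤ Fintype.card (α i)) :
    HasUncountableCofinality (∀ i, alternatingGroup (α i)) := by
  intro E
  obtain ⟨M, hM⟩ := exists_absorbs_trivialOn_card_le E
  have huniv := hM.mul (absorbs_trivialOn_card_le_compl hα E M)
  rw [trivialOn_mul_trivialOn_compl] at huniv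
  exact huniv.exists_eq_top

/-- If `mₙ ≥ 5` for all `n`, then the full direct product `∏ n, Alt(mₙ)` cannot be
written as the union of a countable increasing chain of proper subgroups. -/
theorem stmt_4 (m : ℕ → ℕ) (hm : ∀ n, 5 ≤ m n) :
    ¬ ∃ H : ℕ → Subgroup (∀ n, ↥(alternatingGroup (Fin (m n)))),
        Monotone H ∧ (∀ t, H t ≠ ⊤) ∧
          ∀ g : ∀ n, ↥(alternatingGroup (Fin (m n))), ∃ t, g ∈ H t := by
  rintro ⟨H, hmono, hne, hmem⟩
  obtain ⟨t, ht⟩ := stmt_4_general (fun n => Fin (m n)) (by simpa using hm) ⟨H, hmono, hmem⟩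
  exact hne t ht
end

section
/- Let m = 4n for some n ≥ 2, and let C be the set of all fixed-point-free involutions of {1, …, m} (equivalently, the permutations that are products of 2n disjoint transpositions; these are even, and C is a single conjugacy class of Alt(m)). Then for every φ ∈ Alt(m) there exist π_1, π_2, π_3, π_4 ∈ C such that φ = π_1 π_2 π_3 π_4. -/
/-!
If a permutation of an even number of points has an even number of cycles of each length greater
than `1`, it is conjugate to `σ ⊕ σ⁻¹` for some `σ`. With `τ` the exchange of the two summands,
`σ ⊕ σ⁻¹ = ((σ ⊕ σ⁻¹) τ) τ`, and both factors are fixed-point-free involutions. So it suffices to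
write an even permutation `φ` as `α β` with `α` and `β` of this kind, which depends only on the
cycle lengths of `φ`, fixed points counting as cycles of length `1`.

There are evenly many cycle lengths, with even sum. Split them into pairs `{a, b}` of equal parity.
If `a = b`, there is nothing to do. Otherwise put `a + b = 2 N`. A transposition of points at
distance `a` cuts a cycle of length `2 N` into cycles of lengths `a` and `b`, and one at distance
`N` cuts it into two cycles of length `N`, so some permutation with cycle lengths `{a, b}` is a
product of two transpositions and a permutation with cycle lengths `{N, N}`. The two transpositions
can be taken disjoint unless `{a, b} = {1, 3}`. They can also share a point and so form a `3`-cycle,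
to be matched with the `3`-cycle of a pair `{1, 3}`. By the pigeonhole principle at most one pair
need be `{1, 3}`, and any second pair absorbs it. On `4` points there is no second pair, and
`3`-cycles really are exceptions.
-/

namespace ProductOfInvolutions

open Equiv Equiv.Perm

section CycleType

variable {X Y : Type*} [Fintype X] [DecidableEq X] [Fintype Y] [DecidableEq Y]

theorem cycleType_permCongr (e : X ≃ Y) (σ : Perm X) :
    (e.permCongr σ).cycleType = σ.cycleType := by
  let f : X ≃ {_y : Y // True} := e.trans (subtypeUnivEquiv fun _ => trivial).symm
  have h : e.permCongr σ = σ.extendDomain f := by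
    ext y
    obtain ⟨x, rfl⟩ := e.surjective y
    simpa [f] using (extendDomain_apply_image σ f x).symm
  rw [h, cycleType_extendDomain]

theorem cycleType_sumCongr (σ : Perm X) (τ : Perm Y) :
    (Perm.sumCongr σ τ).cycleType = σ.cycleType + τ.cycleType := by
  classical
  have hσ : Perm.sumCongr σ (1 : Perm Y) =
      σ.extendDomain (ofInjective Sum.inl Sum.inl_injective) := by
    ext (x | y)
    · exact (extendDomain_apply_image σ (ofInjective Sum.inl Sum.inl_injective) x).symm
    · exact (extendDomain_apply_not_subtype σ _ (by simp)).symm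
  have hτ : Perm.sumCongr (1 : Perm X) τ =
      τ.extendDomain (ofInjective Sum.inr Sum.inr_injective) := by
    ext (x | y)
    · exact (extendDomain_apply_not_subtype τ _ (by simp)).symm
    · exact (extendDomain_apply_image τ (ofInjective Sum.inr Sum.inr_injective) y).symm
  have hdisj : (Perm.sumCongr σ (1 : Perm Y)).Disjoint (Perm.sumCongr (1 : Perm X) τ) := by
    rintro (x | y) <;> simp
  have hmul : Perm.sumCongr σ τ = Perm.sumCongr σ 1 * Perm.sumCongr 1 τ := by
    rw [Perm.sumCongr_mul, mul_one, one_mul]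
  rw [hmul, hdisj.cycleType_mul, hσ, hτ, cycleType_extendDomain, cycleType_extendDomain]

theorem exists_permCongr_eq {σ : Perm X} {τ : Perm Y} (hcard : Fintype.card X = Fintype.card Y)
    (h : σ.cycleType = τ.cycleType) : ∃ e : X ≃ Y, e.permCongr σ = τ := by
  let e := Fintype.equivOfCardEq hcard
  obtain ⟨c, hc⟩ := isConj_iff.1 (isConj_of_cycleType_eq ((cycleType_permCongr e σ).trans h))
  exact ⟨e.trans c, by rw [← hc]; rfl⟩

theorem parts_partition_eq_cycleType_add (σ : Perm X) : σ.partition.parts =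
    σ.cycleType + Multiset.replicate (Fintype.card X - σ.cycleType.sum) 1 := by
  rw [parts_partition, sum_cycleType]

theorem parts_partition_permCongr (e : X ≃ Y) (σ : Perm X) :
    (e.permCongr σ).partition.parts = σ.partition.parts := by
  rw [parts_partition_eq_cycleType_add, parts_partition_eq_cycleType_add, cycleType_permCongr,
    Fintype.card_congr e]

theorem parts_partition_sumCongr (σ : Perm X) (τ : Perm Y) :
    (Perm.sumCongr σ τ).partition.parts = σ.partition.parts + τ.partition.parts := by
  have hsub : Fintype.card X + Fintype.card Y - (σ.cycleType.sum + τ.cycleType.sum) =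
      (Fintype.card X - σ.cycleType.sum) + (Fintype.card Y - τ.cycleType.sum) := by
    have hσ := sum_cycleType_le σ
    have hτ := sum_cycleType_le τ
    omega
  simp only [parts_partition_eq_cycleType_add, cycleType_sumCongr, Multiset.sum_add,
    Fintype.card_sum, hsub, Multiset.replicate_add]
  abel

theorem sign_eq_neg_one_pow_card_parts (σ : Perm X) :
    sign σ = (-1) ^ (Fintype.card X + Multiset.card σ.partition.parts) := by
  obtain ⟨k, hk⟩ := Nat.exists_eq_add_of_le (sum_cycleType_le σ)
  rw [sign_of_cycleType, parts_partition_eq_cycleType_add, Multiset.card_add,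
    Multiset.card_replicate, hk, Nat.add_sub_cancel_left]
  have hexp : σ.cycleType.sum + k + (Multiset.card σ.cycleType + k) =
      σ.cycleType.sum + Multiset.card σ.cycleType + 2 * k := by ring
  rw [hexp, pow_add _ _ (2 * k), pow_mul, neg_one_sq, one_pow, mul_one]

end CycleType

section Involution

variable {X Y : Type*}

/-- A fixed-point-free involution of an arbitrary, possibly infinite or empty, type. -/
def IsFixedPointFreeInvolution (π : Perm X) : Prop :=
  π ^ 2 = 1 ∧ ∀ x, π x ≠ x

theorem IsFixedPointFreeInvolution.permCongr {π : Perm X} (h : IsFixedPointFreeInvolution π)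
    (e : X ≃ Y) : IsFixedPointFreeInvolution (e.permCongr π) := by
  refine ⟨?_, fun y hy => h.2 (e.symm y) (by simpa [← eq_symm_apply] using hy)⟩
  rw [← permCongrHom_coe, ← map_pow, h.1, map_one]

theorem exists_sumCongr_inv_eq_mul (σ : Perm X) : ∃ π₁ π₂ : Perm (X ⊕ X),
    IsFixedPointFreeInvolution π₁ ∧ IsFixedPointFreeInvolution π₂ ∧
      Perm.sumCongr σ σ⁻¹ = π₁ * π₂ := by
  refine ⟨Perm.sumCongr σ σ⁻¹ * sumComm X X, sumComm X X, ⟨?_, ?_⟩, ⟨?_, ?_⟩, ?_⟩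
  · ext (x | x) <;> simp [sq]
  · rintro (x | x) <;> simp
  · ext (x | x) <;> simp [sq]
  · rintro (x | x) <;> simp
  · ext (x | x) <;> simp

theorem exists_eq_mul_of_even_cycleType [Fintype X] [DecidableEq X] (hX : Even (Fintype.card X))
    {σ : Perm X} (hσ : Even σ.cycleType) : ∃ π₁ π₂ : Perm X,
      IsFixedPointFreeInvolution π₁ ∧ IsFixedPointFreeInvolution π₂ ∧ σ = π₁ * π₂ := by
  obtain ⟨k, hk⟩ := hX
  obtain ⟨s, hs⟩ := hσ
  obtain ⟨ρ, hρ⟩ : ∃ ρ : Perm (Fin k), ρ.cycleType = s := by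
    refine (exists_with_cycleType_iff (Fin k)).2 ⟨?_, fun a ha => ?_⟩
    · have := sum_cycleType_le σ
      rw [hs, Multiset.sum_add, hk] at this
      rw [Fintype.card_fin]
      omega
    · exact two_le_of_mem_cycleType (hs ▸ Multiset.mem_add.2 (Or.inl ha))
  obtain ⟨e, rfl⟩ := exists_permCongr_eq (σ := Perm.sumCongr ρ ρ⁻¹) (τ := σ) (by simp [hk])
    (by rw [cycleType_sumCongr, cycleType_inv, hρ, hs])
  obtain ⟨π₁, π₂, h₁, h₂, h⟩ := exists_sumCongr_inv_eq_mul ρ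
  exact ⟨_, _, h₁.permCongr e, h₂.permCongr e, by rw [h, permCongr_mul]⟩

end Involution

theorem parts_partition_finRotate {n : ℕ} (hn : 0 < n) : (finRotate n).partition.parts = {n} := by
  obtain rfl | hn : n = 1 ∨ 2 ≤ n := by omega
  · rw [Subsingleton.elim (finRotate 1) 1]
    simp [parts_partition_eq_cycleType_add]
  · simp [parts_partition_eq_cycleType_add, cycleType_finRotate_of_le hn]

theorem val_finRotate {n : ℕ} (x : Fin n) :
    (finRotate n x : ℕ) = if (x : ℕ) + 1 = n then 0 else (x : ℕ) + 1 := by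
  cases n with
  | zero => exact x.elim0
  | succ n => simp only [coe_finRotate, Fin.ext_iff, Fin.val_last, Nat.add_right_cancel_iff]

theorem swap_zero_mul_finRotate {d e : ℕ} (hd : 0 < d) (he : 0 < e) :
    swap (⟨0, by omega⟩ : Fin (d + e)) ⟨d, by omega⟩ * finRotate (d + e) =
      finSumFinEquiv.permCongr (Perm.sumCongr (finRotate d) (finRotate e)) := by
  ext x
  refine Fin.addCases (fun x => ?_) (fun x => ?_) x <;>
  · simp only [Perm.mul_apply, permCongr_apply, Perm.sumCongr_apply,
      finSumFinEquiv_symm_apply_castAdd, finSumFinEquiv_symm_apply_natAdd, Sum.map_inl,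
      Sum.map_inr, finSumFinEquiv_apply_left, finSumFinEquiv_apply_right, swap_apply_def,
      Fin.ext_iff, apply_ite Fin.val, val_finRotate, Fin.val_castAdd, Fin.val_natAdd]
    grind

theorem parts_partition_swap_mul_finRotate {n d e : ℕ} (hd : 0 < d) (he : 0 < e)
    (hn : d + e = n) {i j : Fin n} (hij : (i : ℕ) + d = j) :
    (swap i j * finRotate n).partition.parts = {d, e} := by
  subst hn
  have : NeZero (d + e) := ⟨by omega⟩
  let s : Perm (Fin (d + e)) := Equiv.addRight i
  have hi : s ⟨0, by omega⟩ = i := by simp [s]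
  have hlt : (i : ℕ) + d < d + e := hij ▸ j.is_lt
  have hj : s ⟨d, by omega⟩ = j := by
    simp [s, Fin.ext_iff, Fin.val_add, ← hij, add_comm d (i : ℕ), Nat.mod_eq_of_lt hlt]
  have hcomm : s * finRotate (d + e) * s⁻¹ = finRotate (d + e) := by
    ext1 x
    simp only [s, neg_addRight, coe_mul, coe_addRight, Function.comp_apply, finRotate_apply]
    abel
  have hconj : swap i j * finRotate (d + e) =
      s.permCongr (swap ⟨0, by omega⟩ ⟨d, by omega⟩ * finRotate (d + e)) := by
    rw [permCongr_mul, permCongr_eq_mul, permCongr_eq_mul, hcomm, ← swap_apply_apply, hi, hj]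
  rw [hconj, parts_partition_permCongr, swap_zero_mul_finRotate hd he, parts_partition_permCongr,
    parts_partition_sumCongr, parts_partition_finRotate hd, parts_partition_finRotate he]
  rfl

/-- `IsProductType u v s` says that some permutation with cycle lengths `s` is a product `α * β`
of permutations with cycle lengths `u` and `v`. Fixed points are recorded, as `1`s, in `s` only. -/
def IsProductType (u v s : Multiset ℕ) : Prop :=
  ∃ (X : Type) (_ : Fintype X) (_ : DecidableEq X) (α β : Perm X),
    α.cycleType = u ∧ β.cycleType = v ∧ (α * β).partition.parts = s

theorem IsProductType.add {u v s u' v' s' : Multiset ℕ} (h : IsProductType u v s)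
    (h' : IsProductType u' v' s') : IsProductType (u + u') (v + v') (s + s') := by
  obtain ⟨X, _, _, α, β, rfl, rfl, rfl⟩ := h
  obtain ⟨Y, _, _, α', β', rfl, rfl, rfl⟩ := h'
  exact ⟨X ⊕ Y, inferInstance, inferInstance, Perm.sumCongr α α', Perm.sumCongr β β',
    cycleType_sumCongr _ _, cycleType_sumCongr _ _,
    by rw [Perm.sumCongr_mul, parts_partition_sumCongr]⟩

theorem IsProductType.of_mul_eq {X : Type} [Fintype X] [DecidableEq X] {α β γ : Perm X}
    {u v s : Multiset ℕ} (hα : α.cycleType = u) (hβ : β.cycleType = v) (hγ : γ.partition.parts = s)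
    (h : α * β = γ) : IsProductType u v s :=
  ⟨X, inferInstance, inferInstance, α, β, hα, hβ, by rw [h, hγ]⟩

theorem isProductType_singleton_one : IsProductType 0 0 {1} :=
  .of_mul_eq (X := Fin 1) cycleType_one cycleType_one (parts_partition_finRotate one_pos)
    (Subsingleton.elim _ _)

theorem isProductType_singleton_zero {n : ℕ} (hn : 2 ≤ n) : IsProductType {n} 0 {n} :=
  .of_mul_eq (cycleType_finRotate_of_le hn) cycleType_one
    (parts_partition_finRotate (by omega)) (mul_one _)

theorem isProductType_zero_singleton {n : ℕ} (hn : 2 ≤ n) : IsProductType 0 {n} {n} :=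
  .of_mul_eq cycleType_one (cycleType_finRotate_of_le hn)
    (parts_partition_finRotate (by omega)) (one_mul _)

theorem isProductType_singleton_replicate_one {n : ℕ} (hn : 2 ≤ n) :
    IsProductType {n} {n} (Multiset.replicate n 1) :=
  .of_mul_eq (α := finRotate n) (β := (finRotate n)⁻¹) (cycleType_finRotate_of_le hn)
    (by rw [cycleType_inv, cycleType_finRotate_of_le hn])
    (by simp [parts_partition_eq_cycleType_add]) (mul_inv_cancel _)

theorem isProductType_two_add {a b : ℕ} (ha : 0 < a) (hb : 0 < b) :
    IsProductType {2} {a + b} {a, b} :=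
  .of_mul_eq (isSwap_iff_cycleType.1 (swap_isSwap_iff.2 (by grind)))
    (cycleType_finRotate_of_le (by omega))
    (parts_partition_swap_mul_finRotate ha hb rfl
      (i := ⟨0, by omega⟩) (j := ⟨a, by omega⟩) (by simp)) rfl

theorem isProductType_three_self {n : ℕ} (hn : 3 ≤ n) : IsProductType {3} {n} {n} := by
  let g : Perm (Fin n) := swap ⟨0, by omega⟩ ⟨1, by omega⟩
  have hconj : finRotate n * g * (finRotate n)⁻¹ = swap ⟨1, by omega⟩ ⟨2, by omega⟩ := by
    rw [← swap_apply_apply]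
    congr 1 <;> rw [Fin.ext_iff, val_finRotate] <;> dsimp only <;> split_ifs <;> omega
  have hthree : (g * (finRotate n * g * (finRotate n)⁻¹)).IsThreeCycle := by
    rw [hconj, show g = swap _ _ from swap_comm _ _]
    exact isThreeCycle_swap_mul_swap_same (by simp) (by simp) (by simp)
  refine .of_mul_eq (γ := g.permCongr (finRotate n)) hthree.cycleType
    (cycleType_finRotate_of_le (by omega)) ?_ ?_
  · rw [parts_partition_permCongr, parts_partition_finRotate (by omega)]
  · simp [permCongr_eq_mul, g, mul_assoc]

theorem isProductType_swap_mul_swap {N a b : ℕ} (hN : 2 ≤ N) (ha : 0 < a) (hb : 0 < b)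
    (hab : a + b = N + N) {i j k l : Fin (N + N)} (hij : (i : ℕ) + a = j) (hkl : (k : ℕ) + N = l) :
    IsProductType (swap i j * swap k l).cycleType {N, N} {a, b} := by
  refine .of_mul_eq (β := swap k l * finRotate (N + N)) rfl ?_
    (parts_partition_swap_mul_finRotate ha hb hab hij) (by simp [mul_assoc])
  rw [← filter_parts_partition_eq_cycleType,
    parts_partition_swap_mul_finRotate (by omega) (by omega) rfl hkl]
  simp [Multiset.filter_singleton, hN]

theorem isProductType_three_halves {N a b : ℕ} (ha : 0 < a) (hlt : a < b) (hab : a + b = N + N) :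
    IsProductType {3} {N, N} {a, b} := by
  have h := isProductType_swap_mul_swap (i := ⟨0, by omega⟩) (j := ⟨a, by omega⟩)
    (k := ⟨0, by omega⟩) (l := ⟨N, by omega⟩) (by omega) ha (by omega) hab (by simp) (by simp)
  rwa [(isThreeCycle_swap_mul_swap_same (by grind) (by grind) (by grind)).cycleType] at h

theorem isProductType_two_two_halves {N a b : ℕ} (hN : 3 ≤ N) (ha : 0 < a) (hlt : a < b)
    (hab : a + b = N + N) : IsProductType {2, 2} {N, N} {a, b} := by
  obtain ⟨i, hi₀, hi, hia⟩ : ∃ i, 0 < i ∧ i < N ∧ i + a ≠ N ∧ i + a < N + N := by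
    by_cases h : 1 + a = N
    · exact ⟨2, by omega⟩
    · exact ⟨1, by omega⟩
  have h := isProductType_swap_mul_swap (i := ⟨i, by omega⟩) (j := ⟨i + a, by omega⟩)
    (k := ⟨0, by omega⟩) (l := ⟨N, by omega⟩) (by omega) ha (by omega) hab rfl (by simp)
  rwa [cycleType_swap_mul_swap_of_nodup (by grind)] at h

/-- `IsEvenProductType s` says that some permutation with cycle lengths `s` is a product of two
permutations, each having an even number of cycles of every length greater than `1`; here a
multiset is `Even` if it has the form `w + w`. -/
def IsEvenProductType (s : Multiset ℕ) : Prop :=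
  ∃ u v, Even u ∧ Even v ∧ IsProductType u v s

theorem IsEvenProductType.add {s t : Multiset ℕ} (hs : IsEvenProductType s)
    (ht : IsEvenProductType t) : IsEvenProductType (s + t) := by
  obtain ⟨u, v, hu, hv, h⟩ := hs
  obtain ⟨u', v', hu', hv', h'⟩ := ht
  exact ⟨u + u', v + v', hu.add hu', hv.add hv', h.add h'⟩

theorem even_pair_self (a : ℕ) : Even ({a, a} : Multiset ℕ) :=
  ⟨{a}, rfl⟩

theorem isEvenProductType_zero : IsEvenProductType 0 :=
  ⟨0, 0, .zero, .zero, .of_mul_eq (X := Fin 0) (α := 1) (β := 1) cycleType_one cycleType_one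
    (by simp [parts_partition_eq_cycleType_add]) rfl⟩

theorem isEvenProductType_pair_self {a : ℕ} (ha : 0 < a) : IsEvenProductType {a, a} := by
  obtain rfl | ha : a = 1 ∨ 2 ≤ a := by omega
  · exact ⟨0, 0, .zero, .zero, isProductType_singleton_one.add isProductType_singleton_one⟩
  · exact ⟨{a, a}, 0, even_pair_self a, .zero,
      (isProductType_singleton_zero ha).add (isProductType_singleton_zero ha)⟩

theorem isEvenProductType_pair_of_lt {a b : ℕ} (ha : 0 < a) (hlt : a < b) (hab : Even (a + b))
    (h4 : a + b ≠ 4) : IsEvenProductType {a, b} := by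
  obtain ⟨N, hN⟩ := hab
  exact ⟨{2, 2}, {N, N}, even_pair_self 2, even_pair_self N,
    isProductType_two_two_halves (by omega) ha hlt hN⟩

theorem isEvenProductType_pair {a b : ℕ} (ha : 0 < a) (hb : 0 < b) (hab : Even (a + b))
    (h4 : a = b ∨ a + b ≠ 4) : IsEvenProductType {a, b} := by
  rcases lt_trichotomy a b with hlt | rfl | hlt
  · exact isEvenProductType_pair_of_lt ha hlt hab (by omega)
  · exact isEvenProductType_pair_self ha
  · rw [Multiset.pair_comm]
    exact isEvenProductType_pair_of_lt hb hlt (add_comm a b ▸ hab) (by omega)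

theorem isEvenProductType_one_three_of_lt {a b : ℕ} (ha : 0 < a) (hlt : a < b)
    (hab : Even (a + b)) : IsEvenProductType ({1, 3} + {a, b}) := by
  obtain ⟨N, hN⟩ := hab
  exact ⟨{3, 3}, {N, N}, even_pair_self 3, even_pair_self N,
    (isProductType_singleton_one.add (isProductType_singleton_zero (by omega))).add
      (isProductType_three_halves ha hlt hN)⟩

theorem isEvenProductType_one_three_pair_self {a : ℕ} (ha : 0 < a) :
    IsEvenProductType ({1, 3} + {a, a}) := by
  have h3 : IsProductType {3} 0 {3} := isProductType_singleton_zero (by omega)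
  have h3' : IsProductType 0 {3} {3} := isProductType_zero_singleton (by omega)
  obtain rfl | rfl | ha : a = 1 ∨ a = 2 ∨ 3 ≤ a := by omega
  · rw [show ({1, 3} + {1, 1} : Multiset ℕ) = {3} + Multiset.replicate 3 1 by decide]
    exact ⟨{3, 3}, {3, 3}, even_pair_self 3, even_pair_self 3,
      (isProductType_three_self le_rfl).add (isProductType_singleton_replicate_one (by omega))⟩
  · rw [show ({1, 3} + {2, 2} : Multiset ℕ) = {1, 2} + {2} + {3} by decide]
    exact ⟨{2, 2}, {3, 3}, even_pair_self 2, even_pair_self 3,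
      ((isProductType_two_add one_pos two_pos).add (isProductType_singleton_zero le_rfl)).add h3'⟩
  · exact ⟨{3, 3}, {a, a}, even_pair_self 3, even_pair_self a,
      ((isProductType_singleton_one.add h3).add (isProductType_three_self ha)).add
        (isProductType_zero_singleton (by omega))⟩

theorem isEvenProductType_one_three_add_pair {a b : ℕ} (ha : 0 < a) (hb : 0 < b)
    (hab : Even (a + b)) : IsEvenProductType ({1, 3} + {a, b}) := by
  rcases lt_trichotomy a b with hlt | rfl | hlt
  · exact isEvenProductType_one_three_of_lt ha hlt hab
  · exact isEvenProductType_one_three_pair_self ha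
  · rw [Multiset.pair_comm a]
    exact isEvenProductType_one_three_of_lt hb hlt (add_comm a b ▸ hab)

theorem exists_pair_add_of_card_lt {ι κ : Type*} [Fintype κ] (f : ι → κ) {s : Multiset ι}
    (hs : Fintype.card κ < Multiset.card s) : ∃ a b t, s = {a, b} + t ∧ f a = f b := by
  classical
  have hdup : ¬ (s.map f).Nodup := fun h => by
    have := Finset.card_le_univ ⟨s.map f, h⟩
    simp only [Finset.card_mk, Multiset.card_map] at this
    omega
  simp only [Multiset.nodup_iff_ne_cons_cons, not_forall, not_not] at hdup
  obtain ⟨k, r, hr⟩ := hdup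
  obtain ⟨a, ha, rfl, hr⟩ := (Multiset.map_eq_cons f s _ _).2 hr
  obtain ⟨b, hb, hab, -⟩ := (Multiset.map_eq_cons f _ _ _).2 hr
  refine ⟨a, b, (s.erase a).erase b, ?_, hab.symm⟩
  rw [Multiset.insert_eq_cons, Multiset.cons_add, Multiset.singleton_add, Multiset.cons_erase hb,
    Multiset.cons_erase ha]

-- Two positive numbers of the same parity whose sum is `4` are `1` and `3` or equal, hence the
-- three classes: the even numbers, `1`, and the odd numbers from `3` on.
theorem exists_pair_add_even {s : Multiset ℕ} (hpos : ∀ a ∈ s, 0 < a)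
    (hs : 4 ≤ Multiset.card s) :
    ∃ a b t, s = {a, b} + t ∧ Even (a + b) ∧ (a = b ∨ a + b ≠ 4) := by
  obtain ⟨a, b, t, rfl, hab⟩ := exists_pair_add_of_card_lt
    (fun a : ℕ => if Even a then (0 : Fin 3) else if a = 1 then 1 else 2)
    (by rwa [Fintype.card_fin])
  have ha : 0 < a := hpos a (by simp)
  have hb : 0 < b := hpos b (by simp)
  refine ⟨a, b, t, rfl, ?_⟩
  split_ifs at hab <;> grind

theorem isEvenProductType_of_even {s : Multiset ℕ} (hpos : ∀ a ∈ s, 0 < a)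
    (hcard : Even (Multiset.card s)) (hsum : Even s.sum) (hs : s ≠ {1, 3}) :
    IsEvenProductType s := by
  induction hn : Multiset.card s using Nat.strong_induction_on generalizing s with
  | h n ih =>
  subst hn
  obtain h | h | h : Multiset.card s = 0 ∨ Multiset.card s = 2 ∨ 4 ≤ Multiset.card s := by grind
  · rw [Multiset.card_eq_zero.1 h]
    exact isEvenProductType_zero
  · obtain ⟨a, b, rfl⟩ := Multiset.card_eq_two.1 h
    have ha : 0 < a := hpos a (by simp)
    have hb : 0 < b := hpos b (by simp)
    refine isEvenProductType_pair ha hb (by simpa using hsum) ?_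
    by_contra! h4
    obtain ⟨rfl, rfl⟩ | ⟨rfl, rfl⟩ : a = 1 ∧ b = 3 ∨ a = 3 ∧ b = 1 := by omega
    · exact hs rfl
    · exact hs (Multiset.pair_comm 3 1)
  · obtain ⟨a, b, t, rfl, hab, h4⟩ := exists_pair_add_even hpos h
    have ha : 0 < a := hpos a (by simp)
    have hb : 0 < b := hpos b (by simp)
    by_cases ht : t = {1, 3}
    · rw [ht, add_comm]
      exact isEvenProductType_one_three_add_pair ha hb hab
    · have ht_card : Even (Multiset.card t) := by simpa [Nat.even_add] using hcard
      have ht_sum : Even t.sum := by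
        rw [Multiset.sum_add, Multiset.sum_pair] at hsum
        exact (Nat.even_add.1 hsum).1 hab
      exact (isEvenProductType_pair ha hb hab h4).add
        (ih _ (by simp) (fun c hc => hpos c (Multiset.mem_add.2 (.inr hc))) ht_card ht_sum ht rfl)

theorem IsEvenProductType.exists_eq_mul {X : Type*} [Fintype X] [DecidableEq X] {φ : Perm X}
    (h : IsEvenProductType φ.partition.parts) :
    ∃ α β : Perm X, Even α.cycleType ∧ Even β.cycleType ∧ φ = α * β := by
  obtain ⟨_, _, hu, hv, Y, _, _, α, β, rfl, rfl, hparts⟩ := h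
  have hcard : Fintype.card Y = Fintype.card X := by
    rw [← (α * β).partition.parts_sum, hparts, φ.partition.parts_sum]
  have hcycle : (α * β).cycleType = φ.cycleType := by
    rw [← filter_parts_partition_eq_cycleType, hparts, filter_parts_partition_eq_cycleType]
  obtain ⟨e, rfl⟩ := exists_permCongr_eq hcard hcycle
  exact ⟨e.permCongr α, e.permCongr β, by rwa [cycleType_permCongr], by rwa [cycleType_permCongr],
    permCongr_mul e α β⟩

theorem isEvenProductType_parts_partition {X : Type*} [Fintype X] [DecidableEq X]
    (hX : Even (Fintype.card X)) (hX4 : Fintype.card X ≠ 4) {φ : Perm X}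
    (hφ : φ ∈ alternatingGroup X) : IsEvenProductType φ.partition.parts := by
  have hcard : Even (Multiset.card φ.partition.parts) := by
    rw [mem_alternatingGroup, sign_eq_neg_one_pow_card_parts,
      neg_one_pow_eq_one_iff_even (by decide), Nat.even_add] at hφ
    exact hφ.1 hX
  refine isEvenProductType_of_even (fun a => φ.partition.parts_pos) hcard
    (by rwa [φ.partition.parts_sum]) fun h => hX4 ?_
  rw [← φ.partition.parts_sum, h]
  rfl

end ProductOfInvolutions

open ProductOfInvolutions in
theorem stmt_9_general {X : Type*} [Fintype X] [DecidableEq X] (hX : Even (Fintype.card X))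
    (hX4 : Fintype.card X ≠ 4) {φ : Equiv.Perm X} (hφ : φ ∈ alternatingGroup X) :
    ∃ π₁ π₂ π₃ π₄ : Equiv.Perm X,
      IsFixedPointFreeInvolution π₁ ∧ IsFixedPointFreeInvolution π₂ ∧
      IsFixedPointFreeInvolution π₃ ∧ IsFixedPointFreeInvolution π₄ ∧
      φ = π₁ * π₂ * π₃ * π₄ := by
  obtain ⟨α, β, hα, hβ, rfl⟩ := (isEvenProductType_parts_partition hX hX4 hφ).exists_eq_mul
  obtain ⟨π₁, π₂, h₁, h₂, rfl⟩ := exists_eq_mul_of_even_cycleType hX hα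
  obtain ⟨π₃, π₄, h₃, h₄, rfl⟩ := exists_eq_mul_of_even_cycleType hX hβ
  exact ⟨π₁, π₂, π₃, π₄, h₁, h₂, h₃, h₄, (mul_assoc _ _ _).symm⟩

/-- **Brenner.** Let `m = 4n` with `n ≥ 2`. Every element of `Alt(m)` is a product of
four fixed-point-free involutions (permutations of type `2^{2n}`). -/
theorem stmt_9 (n : ℕ) (hn : 2 ≤ n)
    (φ : Equiv.Perm (Fin (4 * n))) (hφ : φ ∈ alternatingGroup (Fin (4 * n))) :
    ∃ π₁ π₂ π₃ π₄ : Equiv.Perm (Fin (4 * n)),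
      (π₁ ^ 2 = 1 ∧ ∀ x, π₁ x ≠ x) ∧
      (π₂ ^ 2 = 1 ∧ ∀ x, π₂ x ≠ x) ∧
      (π₃ ^ 2 = 1 ∧ ∀ x, π₃ x ≠ x) ∧
      (π₄ ^ 2 = 1 ∧ ∀ x, π₄ x ≠ x) ∧
      φ = π₁ * π₂ * π₃ * π₄ := by
  have hX4 : Fintype.card (Fin (4 * n)) ≠ 4 := by rw [Fintype.card_fin]; omega
  exact stmt_9_general (by simp [Nat.even_iff]) hX4 hφ
end
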